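/- arXiv:1102.2460 — 7 statements merged into one kernel-verified Lean document; each statement's English description precedes it below -/
import Mathlib

section
/- For every n ≥ 1, the characteristic polynomial of the n!×n! rational matrix M whose (u,v) entry is noninv_2(v⁻¹·u) (rows and columns indexed by permutations u, v ∈ S_n) equals X^{n! − 1 − n(n−1)/2} · (X − C(n,2)·n!/2) · (X − (n+1)!/6)^{n−1} · (X − n!/6)^{(n−1)(n−2)/2}, where C(n,2) = n(n−1)/2. -/
/-!
For a pair of values `a < b` let `s_{ab}(u) = ±1` record whether `a` occurs before `b` in the
word of `u`. The pair of positions `{u⁻¹ a, u⁻¹ b}` is a noninversion of `v⁻¹ u` exactly when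
`s_{ab}(u) = s_{ab}(v)`, so the matrix is `½ (C(n,2) J + S Sᵀ)`, where `S` is the
`n! × C(n,2)` matrix of the signs `s_{ab}(u)` (`noninv_eq_sum`).

The columns of `S` sum to zero, so by the identity `charpoly (P Q) ~ charpoly (Q P)` (up to powers
of `X`) the problem reduces to the eigenvalue `C(n,2) n! / 2` and to the small Gram matrix
`½ Sᵀ S`. Symmetry under relabelling of values gives its entries (`sum_ordSign_mul`):
`½ Sᵀ S = (n!/6) (I + Dᵀ D)`, with `D` the oriented incidence matrix of the complete graph `K_n`.
The only nontrivial entry comes from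
`s_{ab} s_{ac} + s_{ba} s_{bc} + s_{ca} s_{cb} = 1`, which forces the average of `s_{ab} s_{ac}`
to be `1/3`. Finally `D Dᵀ = n I - J` is the Laplacian of `K_n`, whose spectrum is
known, and a second application of `charpoly (P Q) ~ charpoly (Q P)` gives that of `Dᵀ D`
(`charpoly_gram`).
-/

/-- `noninv n k w` is the number of `k`-element subsets
`{i₁ < i₂ < ⋯ < i_k}` of `{1,…,n}` with `w i₁ < w i₂ < ⋯ < w i_k`. -/
def noninv (n k : ℕ) (w : Equiv.Perm (Fin n)) : ℕ :=
  ((Finset.powersetCard k (Finset.univ : Finset (Fin n))).filter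
    (fun s => ∀ a ∈ s, ∀ b ∈ s, a < b → w a < w b)).card

namespace NoninvTwo

open Polynomial Matrix

/-- The pairs `a < b` of elements of `Fin n`, i.e. the edges of the complete graph `K_n`, oriented
from the smaller to the larger endpoint. -/
abbrev Edge (n : ℕ) := {p : Fin n × Fin n // p.1 < p.2}

/-- The sign recording whether the value `a` occurs before the value `b` in the word of `u`.
For `a = b` it takes the irrelevant value `-1`. -/
def ordSign {n : ℕ} (a b : Fin n) (u : Equiv.Perm (Fin n)) : ℚ :=
  if u⁻¹ a < u⁻¹ b then 1 else -1

/-- The oriented incidence matrix of the complete graph `K_n`. -/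
def inc (n : ℕ) : Matrix (Fin n) (Edge n) ℚ :=
  Matrix.of fun v p => (if v = p.1.1 then 1 else 0) - (if v = p.1.2 then 1 else 0)

/-- The matrix of the signs `ordSign a b u`, with rows `u` and columns `a < b`. -/
def signMat (n : ℕ) : Matrix (Equiv.Perm (Fin n)) (Edge n) ℚ :=
  Matrix.of fun u p => ordSign p.1.1 p.1.2 u

/-! ### Noninversions and signs -/

lemma ordSign_swap {n : ℕ} {a b : Fin n} (h : a ≠ b) (u : Equiv.Perm (Fin n)) :
    ordSign b a u = - ordSign a b u := by
  have : u⁻¹ a ≠ u⁻¹ b := fun e => h (u⁻¹.injective e)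
  unfold ordSign
  rcases lt_or_gt_of_ne this with h | h
  · rw [if_pos h, if_neg h.asymm]
  · rw [if_pos h, if_neg h.asymm, neg_neg]

lemma ordSign_mul_self {n : ℕ} (a b : Fin n) (u : Equiv.Perm (Fin n)) :
    ordSign a b u * ordSign a b u = 1 := by
  unfold ordSign; split_ifs <;> norm_num

/-- The bijection sends the pair of values `a < b` to the pair of positions `{u⁻¹ a, u⁻¹ b}`. -/
lemma noninv_eq_card (n : ℕ) (u v : Equiv.Perm (Fin n)) :
    noninv n 2 (v⁻¹ * u) =
      (Finset.univ.filter fun p : Edge n =>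
        (u⁻¹ p.1.1 < u⁻¹ p.1.2 ↔ v⁻¹ p.1.1 < v⁻¹ p.1.2)).card := by
  have hui : ∀ x, u (u⁻¹ x) = x := u.apply_symm_apply
  have hiu : ∀ x, u⁻¹ (u x) = x := u.symm_apply_apply
  unfold noninv
  symm
  refine Finset.card_bij (fun p _ => {u⁻¹ p.1.1, u⁻¹ p.1.2}) ?_ ?_ ?_
  · rintro ⟨⟨a, b⟩, hab⟩ hp
    have hab' : a ≠ b := ne_of_lt hab
    have hu : u⁻¹ a ≠ u⁻¹ b := fun e => hab' (u⁻¹.injective e)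
    have hv : v⁻¹ a ≠ v⁻¹ b := fun e => hab' (v⁻¹.injective e)
    simp only [Finset.mem_filter, Finset.mem_univ, true_and] at hp
    simp only [Finset.mem_filter, Finset.mem_powersetCard, Finset.subset_univ, true_and,
      Finset.card_pair hu]
    intro x hx y hy hxy
    simp only [Finset.mem_insert, Finset.mem_singleton] at hx hy
    rcases hx with rfl | rfl <;> rcases hy with rfl | rfl <;>
      simp only [Equiv.Perm.mul_apply, hui] <;> grind
  · rintro ⟨⟨a, b⟩, hab⟩ hp ⟨⟨c, d⟩, hcd⟩ hq h
    have h1 : u⁻¹ a ∈ ({u⁻¹ c, u⁻¹ d} : Finset (Fin n)) := by rw [← h]; simp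
    have h2 : u⁻¹ b ∈ ({u⁻¹ c, u⁻¹ d} : Finset (Fin n)) := by rw [← h]; simp
    simp only [Finset.mem_insert, Finset.mem_singleton, EmbeddingLike.apply_eq_iff_eq] at h1 h2
    dsimp only at hab hcd
    simp only [Subtype.mk.injEq, Prod.mk.injEq]
    grind
  · intro s hs
    simp only [Finset.mem_filter, Finset.mem_powersetCard, Finset.subset_univ, true_and] at hs
    obtain ⟨hs2, hs⟩ := hs
    obtain ⟨x, y, hxy, rfl⟩ := Finset.card_eq_two.1 hs2
    have hxy2 := hs x (by simp) y (by simp)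
    have hyx2 := hs y (by simp) x (by simp)
    simp only [Equiv.Perm.mul_apply] at hxy2 hyx2
    have hne : u x ≠ u y := fun e => hxy (u.injective e)
    rcases lt_or_gt_of_ne hne with h | h
    · refine ⟨⟨(u x, u y), h⟩, ?_, by simp⟩
      simp only [Finset.mem_filter, Finset.mem_univ, true_and, hiu]
      grind
    · refine ⟨⟨(u y, u x), h⟩, ?_, by simp [Finset.pair_comm]⟩
      simp only [Finset.mem_filter, Finset.mem_univ, true_and, hiu]
      grind

/-- Every pair of positions is a noninversion of the identity. -/
lemma card_edge (n : ℕ) : Fintype.card (Edge n) = n.choose 2 := by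
  have h := noninv_eq_card n 1 1
  simp only [iff_self, Finset.filter_true, Finset.card_univ] at h
  rw [← h, noninv, Finset.filter_true_of_mem, Finset.card_powersetCard, Finset.card_univ,
    Fintype.card_fin]
  intro s _ a _ b _ hab
  simpa using hab

lemma noninv_eq_sum (n : ℕ) (u v : Equiv.Perm (Fin n)) :
    (noninv n 2 (v⁻¹ * u) : ℚ) =
      (n.choose 2 : ℚ) / 2 + ∑ p : Edge n, ordSign p.1.1 p.1.2 u * (ordSign p.1.1 p.1.2 v / 2) := by
  rw [noninv_eq_card, Finset.card_filter, ← card_edge, ← Finset.card_univ,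
    Finset.card_eq_sum_ones]
  push_cast
  rw [Finset.sum_div, ← Finset.sum_add_distrib]
  refine Finset.sum_congr rfl fun p _ => ?_
  unfold ordSign
  by_cases h1 : u⁻¹ p.1.1 < u⁻¹ p.1.2 <;> by_cases h2 : v⁻¹ p.1.1 < v⁻¹ p.1.2 <;>
    simp only [h1, h2, if_true, if_false, iff_self, iff_false, iff_true, not_true] <;> norm_num

/-! ### Inner products of the columns of the sign matrix -/

/-- Relabelling the values by `σ` permutes the summands. -/
lemma sum_relabel {n : ℕ} (σ : Equiv.Perm (Fin n)) (a b c d : Fin n) :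
    ∑ u, ordSign (σ a) (σ b) u * ordSign (σ c) (σ d) u = ∑ u, ordSign a b u * ordSign c d u := by
  rw [← Equiv.sum_comp (Equiv.mulLeft σ)]
  simp [ordSign]

lemma sum_ordSign {n : ℕ} {a b : Fin n} (h : a ≠ b) : ∑ u, ordSign a b u = 0 := by
  have h1 : ∑ u, ordSign b a u = ∑ u, ordSign a b u := by
    rw [← Equiv.sum_comp (Equiv.mulLeft (Equiv.swap a b))]
    simp [ordSign]
  have h2 : ∑ u, ordSign b a u = - ∑ u, ordSign a b u := by
    rw [← Finset.sum_neg_distrib]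
    exact Finset.sum_congr rfl fun u _ => ordSign_swap h u
  linarith

/-- The transposition of `a` and `b` fixes `c` and `d` but reverses the first sign. -/
lemma sum_disjoint {n : ℕ} {a b c d : Fin n} (hab : a ≠ b) (hac : a ≠ c) (had : a ≠ d)
    (hbc : b ≠ c) (hbd : b ≠ d) : ∑ u, ordSign a b u * ordSign c d u = 0 := by
  have h1 := sum_relabel (Equiv.swap a b) a b c d
  rw [Equiv.swap_apply_left, Equiv.swap_apply_right,
    Equiv.swap_apply_of_ne_of_ne hac.symm hbc.symm,
    Equiv.swap_apply_of_ne_of_ne had.symm hbd.symm] at h1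
  simp only [ordSign_swap hab, neg_mul, Finset.sum_neg_distrib] at h1
  linarith

lemma sum_self {n : ℕ} (a b : Fin n) :
    ∑ u, ordSign a b u * ordSign a b u = (n.factorial : ℚ) := by
  simp [ordSign_mul_self, Fintype.card_perm]

/-- The three products obtained by letting each of `a`, `b`, `c` play the role of the common
element have the same sum; pointwise they add up to `1`, since only the middle one of the three
positions contributes `-1`. -/
lemma sum_common {n : ℕ} {a b c : Fin n} (hab : a ≠ b) (hac : a ≠ c) (hbc : b ≠ c) :
    ∑ u, ordSign a b u * ordSign a c u = (n.factorial : ℚ) / 3 := by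
  have h1 := sum_relabel (Equiv.swap a b) a b a c
  rw [Equiv.swap_apply_left, Equiv.swap_apply_right,
    Equiv.swap_apply_of_ne_of_ne hac.symm hbc.symm] at h1
  have h2 := sum_relabel (Equiv.swap a c) a b a c
  rw [Equiv.swap_apply_left, Equiv.swap_apply_right,
    Equiv.swap_apply_of_ne_of_ne hab.symm hbc] at h2
  have h3 : ∑ u, (ordSign a b u * ordSign a c u + ordSign b a u * ordSign b c u
      + ordSign c b u * ordSign c a u) = (n.factorial : ℚ) := by
    have : ∀ u : Equiv.Perm (Fin n), ordSign a b u * ordSign a c u + ordSign b a u * ordSign b c u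
      + ordSign c b u * ordSign c a u = 1 := by
      intro u
      have e1 : u⁻¹ a ≠ u⁻¹ b := fun e => hab (u⁻¹.injective e)
      have e2 : u⁻¹ a ≠ u⁻¹ c := fun e => hac (u⁻¹.injective e)
      have e3 : u⁻¹ b ≠ u⁻¹ c := fun e => hbc (u⁻¹.injective e)
      unfold ordSign
      split_ifs <;> first | (exfalso; order) | norm_num
    simp [this, Fintype.card_perm]
  rw [Finset.sum_add_distrib, Finset.sum_add_distrib] at h3
  linarith

/-- The Gram matrix of the columns of the sign matrix, in terms of the incidence matrix. -/
lemma sum_ordSign_mul {n : ℕ} (p q : Edge n) :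
    ∑ u, ordSign p.1.1 p.1.2 u * ordSign q.1.1 q.1.2 u =
      (n.factorial : ℚ) / 3 * ((if p = q then 1 else 0) + ∑ v, inc n v p * inc n v q) := by
  obtain ⟨⟨a, b⟩, hab⟩ := p
  obtain ⟨⟨c, d⟩, hcd⟩ := q
  dsimp only at hab hcd
  have hD : ∑ v, inc n v ⟨(a, b), hab⟩ * inc n v ⟨(c, d), hcd⟩ =
      (if a = c then 1 else 0) - (if a = d then 1 else 0)
        - (if b = c then 1 else 0) + (if b = d then 1 else 0) := by
    simp only [inc, Matrix.of_apply, sub_mul, mul_sub, Finset.sum_sub_distrib, ite_mul, one_mul,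
      zero_mul, Finset.sum_ite_eq', Finset.mem_univ, if_true]
    ring
  rw [hD]
  simp only [Subtype.mk.injEq, Prod.mk.injEq]
  have hab' := hab.ne
  have hcd' := hcd.ne
  by_cases hac : a = c
  · subst hac
    by_cases hbd : b = d
    · subst hbd
      rw [sum_self]
      simp [hab', hab'.symm]
      ring
    · rw [sum_common hab' hcd' hbd]
      simp [hbd, hcd', hab'.symm]
  · by_cases hbd : b = d
    · subst hbd
      simp only [ordSign_swap hab'.symm, ordSign_swap hcd'.symm, neg_mul_neg]
      rw [sum_common hab'.symm hcd'.symm hac]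
      simp [hac, hab', hcd'.symm]
    · by_cases had : a = d
      · subst had
        have hbc : b ≠ c := (hcd.trans hab).ne'
        simp only [ordSign_swap hcd'.symm, mul_neg, Finset.sum_neg_distrib]
        rw [sum_common hab' hcd'.symm hbc]
        simp [hac, hbc, hab'.symm]
      · by_cases hbc : b = c
        · subst hbc
          simp only [ordSign_swap hab'.symm, neg_mul, Finset.sum_neg_distrib]
          rw [sum_common hab'.symm hcd' had]
          simp [hab', had, hbd]
        · rw [sum_disjoint hab' hac had hbc hbd]
          simp [hac, had, hbc, hbd]

/-! ### The Laplacian of the complete graph -/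

lemma sum_edge {n : ℕ} (g : Fin n → Fin n → ℚ) (hs : ∀ a b, g a b = g b a) (h0 : ∀ a, g a a = 0) :
    ∑ p : Edge n, g p.1.1 p.1.2 = (∑ a, ∑ b, g a b) / 2 := by
  have h1 : ∑ p : Edge n, g p.1.1 p.1.2 = ∑ a, ∑ b, if a < b then g a b else 0 := by
    rw [← Fintype.sum_prod_type', ← Finset.sum_filter]
    exact (Finset.sum_subtype _ (by simp) fun p : Fin n × Fin n => g p.1 p.2).symm
  have h2 : ∑ a, ∑ b, g a b =
      (∑ a, ∑ b, if a < b then g a b else 0) + ∑ a, ∑ b, if b < a then g b a else 0 := by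
    rw [← Finset.sum_add_distrib]
    refine Finset.sum_congr rfl fun a _ => ?_
    rw [← Finset.sum_add_distrib]
    refine Finset.sum_congr rfl fun b _ => ?_
    rcases lt_trichotomy a b with h | h | h
    · simp [h, h.le]
    · simp [h, h0]
    · simp [h, h.le, hs a b]
  rw [Finset.sum_comm (f := fun a b => if b < a then g b a else 0)] at h2
  rw [h1, h2]
  ring

/-- The matrix `D Dᵀ` is the Laplacian `n I - J` of `K_n`; it is written as a rank-one matrix minus
a scalar matrix so that its characteristic polynomial can be read off. -/
lemma inc_mul_transpose (n : ℕ) (c : ℚ) :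
    inc n * (c • (inc n)ᵀ) =
      vecMulVec (fun _ => -c) (fun _ => 1) - Matrix.scalar (Fin n) (-(c * n)) := by
  ext v w
  have h := sum_edge (n := n) (fun a b =>
    ((if v = a then 1 else 0) - (if v = b then 1 else 0)) *
      ((if w = a then 1 else 0) - (if w = b then 1 else 0))) (fun a b => by ring)
      (fun a => by ring)
  rw [Matrix.mul_smul, Matrix.smul_apply, Matrix.mul_apply]
  simp only [inc, Matrix.transpose_apply, Matrix.of_apply]
  rw [h]
  simp only [sub_mul, mul_sub, Finset.sum_sub_distrib, ite_mul, one_mul,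
      zero_mul, Finset.sum_ite_eq, Finset.mem_univ, if_true, Finset.sum_const,
      Finset.card_univ, Fintype.card_fin, Finset.sum_ite_irrel]
  by_cases hvw : v = w
  · subst hvw
    simp [vecMulVec]
    ring
  · simp [vecMulVec, hvw, Ne.symm hvw]
    ring

lemma choose_two_add_one (n : ℕ) (hn : 1 ≤ n) :
    n.choose 2 + 1 = (n - 1) * (n - 2) / 2 + n := by
  obtain ⟨m, rfl⟩ := Nat.exists_eq_add_of_le' hn
  have : (m + 1 - 1) * (m + 1 - 2) / 2 = m.choose 2 := by
    rw [Nat.choose_two_right]; congr 1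
  rw [this, Nat.choose_succ_succ' m 1, Nat.choose_one_right]
  ring

/-- The characteristic polynomial of `c (I + Dᵀ D)`, obtained from that of `c D Dᵀ` by substituting
`X - c` for `X`. -/
lemma charpoly_gram (n : ℕ) (hn : 1 ≤ n) (c : ℚ) :
    (c • (inc n)ᵀ * inc n - Matrix.scalar (Edge n) (-c)).charpoly =
      (X - C (c * (n + 1))) ^ (n - 1) * (X - C c) ^ ((n - 1) * (n - 2) / 2) := by
  have h := congrArg (fun P : ℚ[X] => P.comp (X + C (-c)))
    (charpoly_mul_comm' (c • (inc n)ᵀ) (inc n))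
  rw [inc_mul_transpose, charpoly_sub_scalar, charpoly_vecMulVec] at h
  rw [charpoly_sub_scalar]
  have hL : (X ^ Fintype.card (Fin n) -
      ((fun _ : Fin n => -c) ⬝ᵥ fun _ => (1 : ℚ)) • X ^ (Fintype.card (Fin n) - 1) : ℚ[X]) =
      X ^ (n - 1) * (X + C (c * n)) := by
    obtain ⟨m, rfl⟩ := Nat.exists_eq_add_of_le' hn
    simp [dotProduct, smul_eq_C_mul]
    ring
  rw [hL] at h
  simp only [mul_comp, pow_comp, X_comp, add_comp, C_comp, Fintype.card_fin, card_edge] at h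
  have hX : (X + C (-c) : ℚ[X]) = X - C c := by simp [sub_eq_add_neg]
  have hY : (X + C (-c) + C (-(c * n)) : ℚ[X]) = X - C (c * (n + 1)) := by
    simp [sub_eq_add_neg, mul_add]; ring
  have hZ : (X + C (-c) + C (-(c * n)) + C (c * n) : ℚ[X]) = X - C c := by
    rw [add_assoc, ← C_add]; simp [sub_eq_add_neg]
  rw [hZ, hY] at h
  rw [hX] at h ⊢
  have h0 : (X - C c : ℚ[X]) ^ n ≠ 0 := pow_ne_zero _ (X_sub_C_ne_zero c)
  apply mul_left_cancel₀ h0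
  rw [h]
  calc _ = (X - C c) ^ (n.choose 2 + 1) * (X - C (c * (n + 1))) ^ (n - 1) := by ring
    _ = _ := by rw [choose_two_add_one n hn]; ring

lemma one_add_choose_two_le_factorial (n : ℕ) (hn : 1 ≤ n) : 1 + n.choose 2 ≤ n.factorial := by
  induction n, hn using Nat.le_induction with
  | base => decide
  | succ m hm ih =>
    rw [Nat.choose_succ_succ' m 1, Nat.choose_one_right, Nat.factorial_succ]
    nlinarith [Nat.factorial_pos m]

end NoninvTwo

open NoninvTwo Matrix in
/-- The characteristic polynomial of the `n!×n!` matrix with `(u,v)` entry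
`noninv₂(v⁻¹·u)` is
`X^{n!−1−n(n−1)/2} · (X − C(n,2)·n!/2) · (X − (n+1)!/6)^{n−1} · (X − n!/6)^{(n−1)(n−2)/2}`. -/
theorem charpoly_noninv_two (n : ℕ) (hn : 1 ≤ n) :
    Matrix.charpoly
      (Matrix.of (fun u v : Equiv.Perm (Fin n) => (noninv n 2 (v⁻¹ * u) : ℚ))) =
    Polynomial.X ^ (n.factorial - 1 - n * (n - 1) / 2) *
      (Polynomial.X - Polynomial.C ((n.choose 2 : ℚ) * (n.factorial : ℚ) / 2)) *
      (Polynomial.X - Polynomial.C (((n + 1).factorial : ℚ) / 6)) ^ (n - 1) *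
      (Polynomial.X - Polynomial.C ((n.factorial : ℚ) / 6)) ^ ((n - 1) * (n - 2) / 2) := by
  set A : Matrix (Equiv.Perm (Fin n)) Unit ℚ := Matrix.of fun _ _ => 1 with hA
  set B : Matrix Unit (Equiv.Perm (Fin n)) ℚ := Matrix.of fun _ _ => (n.choose 2 : ℚ) / 2 with hB
  have hM : Matrix.of (fun u v : Equiv.Perm (Fin n) => (noninv n 2 (v⁻¹ * u) : ℚ)) =
      fromCols A (signMat n) * fromRows B ((1 / 2 : ℚ) • (signMat n)ᵀ) := by
    rw [fromCols_mul_fromRows]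
    ext u v
    simp [noninv_eq_sum, Matrix.mul_apply, hA, hB, signMat, div_eq_inv_mul, Finset.mul_sum, mul_left_comm]
  have h11 : B * A = Matrix.diagonal fun _ => (n.choose 2 : ℚ) * (n.factorial : ℚ) / 2 := by
    ext i j
    simp [Matrix.mul_apply, hA, hB, Fintype.card_perm]
    ring
  have h12 : B * signMat n = 0 := by
    ext i p
    simp [Matrix.mul_apply, hB, signMat, ← Finset.mul_sum, sum_ordSign p.2.ne]
  have h22 : (1 / 2 : ℚ) • (signMat n)ᵀ * signMat n =
      ((n.factorial : ℚ) / 6) • (inc n)ᵀ * inc n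
        - Matrix.scalar (Edge n) (-((n.factorial : ℚ) / 6)) := by
    ext p q
    have h := sum_ordSign_mul p q
    rw [Matrix.smul_mul, Matrix.smul_mul, Matrix.sub_apply, Matrix.smul_apply, Matrix.smul_apply,
      Matrix.mul_apply, Matrix.mul_apply]
    simp only [signMat, Matrix.transpose_apply, Matrix.of_apply, h, smul_eq_mul,
      Matrix.scalar_apply, Matrix.diagonal_apply]
    split_ifs <;> ring
  have hcard : Fintype.card (Unit ⊕ Edge n) = 1 + n.choose 2 := by
    rw [Fintype.card_sum, card_edge, Fintype.card_unit]
  have hcard' : Fintype.card (Equiv.Perm (Fin n)) = n.factorial := by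
    rw [Fintype.card_perm, Fintype.card_fin]
  rw [hM, charpoly_mul_comm_of_le _ _ (by
      rw [hcard, hcard']; exact one_add_choose_two_le_factorial n hn),
    fromRows_mul_fromCols, h12, charpoly_fromBlocks_zero₁₂, h11, h22, charpoly_gram n hn,
    charpoly_diagonal, hcard, hcard', ← Nat.sub_sub, Nat.choose_two_right]
  have hf : (n.factorial : ℚ) / 6 * (n + 1) = ((n + 1).factorial : ℚ) / 6 := by
    rw [Nat.factorial_succ]; push_cast; ring
  rw [hf, Finset.univ_unique, Finset.prod_singleton]
  ring
end

section
/- For every n ≥ 1, every complex eigenvalue of the n!×n! matrix whose (σ,τ) entry is inv(σ∘τ⁻¹) (rows and columns indexed by permutations σ, τ ∈ S_n) is an integer; that is, every root in ℂ of its characteristic polynomial is an integer. -/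
/-!
Write `s_σ(a,b) ∈ {-1,0,1}` for the sign of `σ b - σ a`. Counting discordant pairs gives
`4 inv(σ τ⁻¹) = n(n-1) - ∑_{a,b} s_σ(a,b) s_τ(a,b)` (`four_mul_invCount`), so the matrix is a
multiple of the all-ones matrix minus a quarter of the Gram matrix `V Vᵀ` of the vectors `s_σ`.

Let `f` be an eigenvector for `z`. If its entries do not sum to zero, adding up the equations shows
that `z` is the constant column sum `∑_w inv(w)`. Otherwise only the Gram part acts on `f`, and for
`z ≠ 0` the eigenvector can be moved to pairs: `g = Vᵀ f` is nonzero and `Vᵀ V g = -4 z g`.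
The entries of `Vᵀ V` are explicit (`pairCorr_eq`): up to the factor `n!/3` they depend only on the
coincidences among the four indices, because by symmetry the correlation of `s(a,b)` and `s(a,d)`
is `1/3`. With `h(c) = ∑_b g(c,b)` the equation becomes `z g(c,d) = -n!/6 (h(c) - h(d) + g(c,d))`,
and summing over `d` gives `z h(c) = -(n+1)!/6 h(c)`. Hence `z = -(n+1)!/6`, or `h = 0` and
`z = -n!/6`; for `n ≤ 2` the latter cannot occur since `g` is then determined by `h`.
-/

/-- `invCount n w` is the inversion number of `w`, i.e., the number of pairs
`(i,j)` with `1 ≤ i < j ≤ n` and `w i > w j`. -/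
def invCount (n : ℕ) (w : Equiv.Perm (Fin n)) : ℕ :=
  ((Finset.univ : Finset (Fin n × Fin n)).filter
    (fun p => p.1 < p.2 ∧ w p.2 < w p.1)).card

open Finset

/-- The sign of `σ b - σ a`, as a complex number. -/
noncomputable def pairSign {n : ℕ} (σ : Equiv.Perm (Fin n)) (a b : Fin n) : ℂ :=
  if σ a < σ b then 1 else if σ b < σ a then -1 else 0

/-- The unnormalized correlation of the signs of the pairs `(a,b)` and `(c,d)` under a uniformly
random permutation. -/
noncomputable def pairCorr {n : ℕ} (a b c d : Fin n) : ℂ :=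
  ∑ σ : Equiv.Perm (Fin n), pairSign σ a b * pairSign σ c d

lemma pairSign_self {n : ℕ} (σ : Equiv.Perm (Fin n)) (a : Fin n) : pairSign σ a a = 0 := by
  simp [pairSign]

lemma pairSign_swap {n : ℕ} (σ : Equiv.Perm (Fin n)) (a b : Fin n) :
    pairSign σ b a = -pairSign σ a b := by
  unfold pairSign
  rcases lt_trichotomy (σ a) (σ b) with h | h | h
  · simp [h, h.not_gt]
  · simp [h]
  · simp [h, h.not_gt]

lemma pairSign_mul_self {n : ℕ} (σ : Equiv.Perm (Fin n)) {a b : Fin n} (hab : a ≠ b) :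
    pairSign σ a b * pairSign σ a b = 1 := by
  unfold pairSign
  have : σ a ≠ σ b := fun h => hab (σ.injective h)
  rcases lt_or_gt_of_ne this with h | h
  · simp [h]
  · simp [h, h.not_gt]

/-- Among three distinct values, exactly the extreme ones compare the same way to the other two. -/
lemma pairSign_triple {n : ℕ} (σ : Equiv.Perm (Fin n)) {a b d : Fin n} (hab : a ≠ b)
    (had : a ≠ d) (hbd : b ≠ d) :
    pairSign σ a b * pairSign σ a d + pairSign σ b a * pairSign σ b d
      + pairSign σ d b * pairSign σ d a = 1 := by
  unfold pairSign
  have h1 : σ a ≠ σ b := fun h => hab (σ.injective h)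
  have h2 : σ a ≠ σ d := fun h => had (σ.injective h)
  have h3 : σ b ≠ σ d := fun h => hbd (σ.injective h)
  rcases lt_or_gt_of_ne h1 with h1 | h1 <;> rcases lt_or_gt_of_ne h2 with h2 | h2 <;>
    rcases lt_or_gt_of_ne h3 with h3 | h3 <;>
    first
    | (exfalso; order)
    | simp [h1, h2, h3, h1.not_gt, h2.not_gt, h3.not_gt]

lemma pairCorr_perm {n : ℕ} (π : Equiv.Perm (Fin n)) (a b c d : Fin n) :
    pairCorr (π a) (π b) (π c) (π d) = pairCorr a b c d := by
  unfold pairCorr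
  exact Fintype.sum_equiv (Equiv.mulRight π) _ _ (fun σ => rfl)

lemma pairCorr_swap_left {n : ℕ} (a b c d : Fin n) : pairCorr b a c d = -pairCorr a b c d := by
  simp only [pairCorr, ← sum_neg_distrib]
  exact sum_congr rfl fun σ _ => by rw [pairSign_swap σ a b]; ring

lemma pairCorr_swap_right {n : ℕ} (a b c d : Fin n) : pairCorr a b d c = -pairCorr a b c d := by
  simp only [pairCorr, ← sum_neg_distrib]
  exact sum_congr rfl fun σ _ => by rw [pairSign_swap σ c d]; ring

lemma pairCorr_same {n : ℕ} {a b : Fin n} (hab : a ≠ b) :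
    pairCorr a b a b = (n.factorial : ℂ) := by
  simp [pairCorr, pairSign_mul_self _ hab, Fintype.card_perm]

lemma pairCorr_disjoint {n : ℕ} {a b c d : Fin n} (hac : a ≠ c) (had : a ≠ d) (hbc : b ≠ c)
    (hbd : b ≠ d) : pairCorr a b c d = 0 := by
  have h := pairCorr_perm (Equiv.swap a b) a b c d
  rw [Equiv.swap_apply_left, Equiv.swap_apply_right,
    Equiv.swap_apply_of_ne_of_ne hac.symm hbc.symm,
    Equiv.swap_apply_of_ne_of_ne had.symm hbd.symm, pairCorr_swap_left] at h
  linear_combination (-1 / 2 : ℂ) * h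

lemma pairCorr_share {n : ℕ} {a b d : Fin n} (hab : a ≠ b) (had : a ≠ d) (hbd : b ≠ d) :
    pairCorr a b a d = (n.factorial : ℂ) / 3 := by
  have h1 := pairCorr_perm (Equiv.swap a b) a b a d
  rw [Equiv.swap_apply_left, Equiv.swap_apply_right,
    Equiv.swap_apply_of_ne_of_ne had.symm hbd.symm] at h1
  have h2 := pairCorr_perm (Equiv.swap a d) a b a d
  rw [Equiv.swap_apply_left, Equiv.swap_apply_right,
    Equiv.swap_apply_of_ne_of_ne hab.symm hbd] at h2
  have h3 : pairCorr a b a d + pairCorr b a b d + pairCorr d b d a = (n.factorial : ℂ) := by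
    simp only [pairCorr, ← sum_add_distrib, pairSign_triple _ hab had hbd]
    simp [Fintype.card_perm]
  linear_combination (1 / 3 : ℂ) * (h3 - h1 - h2)

/-- Closed form of the correlations, valid also for degenerate pairs. -/
lemma pairCorr_eq {n : ℕ} (a b c d : Fin n) :
    pairCorr a b c d = (n.factorial : ℂ) / 3 *
      ((if a = c then 1 else 0) + (if b = d then 1 else 0) - (if a = d then 1 else 0)
        - (if b = c then 1 else 0) + (if a = c then (if b = d then 1 else 0) else 0)
        - (if a = d then (if b = c then 1 else 0) else 0)) := by
  by_cases hab : a = b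
  · subst hab
    have : pairCorr a a c d = 0 := by simp [pairCorr, pairSign_self]
    rw [this]
    split_ifs <;> simp_all
  by_cases hcd : c = d
  · subst hcd
    have : pairCorr a b c c = 0 := by simp [pairCorr, pairSign_self]
    rw [this]
    split_ifs <;> simp_all
  by_cases hac : a = c
  · subst hac
    by_cases hbd : b = d
    · subst hbd
      rw [pairCorr_same hab]
      simp [hab, Ne.symm hab]
      ring
    · rw [pairCorr_share hab hcd hbd]
      simp [hcd, hbd, Ne.symm hab]
  by_cases had : a = d
  · subst had
    rw [pairCorr_swap_right]
    by_cases hbc : b = c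
    · subst hbc
      rw [pairCorr_same hab]
      simp [hab, Ne.symm hab]
      ring
    · rw [pairCorr_share hab hac hbc]
      simp [hac, hbc, Ne.symm hab]
  by_cases hbc : b = c
  · subst hbc
    rw [pairCorr_swap_left, pairCorr_share (Ne.symm hab) hcd had]
    simp [hab, had, hcd]
  by_cases hbd : b = d
  · subst hbd
    rw [pairCorr_swap_left, pairCorr_swap_right, pairCorr_share (Ne.symm hab) hbc hac]
    simp [hab, hac, hbc]
  rw [pairCorr_disjoint hac had hbc hbd]
  simp [hac, had, hbc, hbd]

/-- Inversions of `σ τ⁻¹` are the pairs that `σ` and `τ` order differently; each unordered pair is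
counted twice in the sums on the right. -/
lemma four_mul_invCount {n : ℕ} (σ τ : Equiv.Perm (Fin n)) :
    4 * (invCount n (σ * τ⁻¹) : ℂ) =
      (∑ a : Fin n, ∑ b : Fin n, if a = b then (0 : ℂ) else 1)
        - ∑ a : Fin n, ∑ b : Fin n, pairSign σ a b * pairSign τ a b := by
  have h1 : (invCount n (σ * τ⁻¹) : ℂ) =
      ∑ a : Fin n, ∑ b : Fin n, if τ a < τ b ∧ σ b < σ a then (1 : ℂ) else 0 := by
    unfold invCount
    rw [card_filter, Nat.cast_sum, Fintype.sum_prod_type]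
    symm
    refine Fintype.sum_equiv τ _ _ fun a => Fintype.sum_equiv τ _ _ fun b => ?_
    simp
  have h2 : (invCount n (σ * τ⁻¹) : ℂ) =
      ∑ a : Fin n, ∑ b : Fin n, if τ b < τ a ∧ σ a < σ b then (1 : ℂ) else 0 := by
    rw [h1, sum_comm]
  have h3 : 4 * (invCount n (σ * τ⁻¹) : ℂ) =
      2 * (invCount n (σ * τ⁻¹) : ℂ) + 2 * (invCount n (σ * τ⁻¹) : ℂ) := by ring
  rw [h3]
  nth_rewrite 1 [h1]
  rw [h2]
  simp only [mul_sum, ← sum_add_distrib, ← sum_sub_distrib]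
  refine sum_congr rfl fun a _ => sum_congr rfl fun b _ => ?_
  by_cases hab : a = b
  · subst hab
    simp [pairSign]
  have k1 : σ a ≠ σ b := fun h => hab (σ.injective h)
  have k2 : τ a ≠ τ b := fun h => hab (τ.injective h)
  unfold pairSign
  rcases lt_or_gt_of_ne k1 with k1 | k1 <;> rcases lt_or_gt_of_ne k2 with k2 | k2 <;>
    simp [hab, k1, k2, k1.not_gt, k2.not_gt] <;> norm_num

lemma exists_int_of_six_dvd {m : ℕ} (h : 6 ∣ m) {z : ℂ} (hz : z = -(m : ℂ) / 6) :
    ∃ k : ℤ, z = k := by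
  obtain ⟨k, rfl⟩ := h
  refine ⟨-k, ?_⟩
  rw [hz]
  push_cast
  ring

/-- An eigenvalue of the correlation matrix acting on antisymmetric functions of pairs, scaled by
`-1/4`, is an integer. -/
lemma int_of_pair_eigen {n : ℕ} {z : ℂ} (g : Fin n → Fin n → ℂ)
    (hanti : ∀ a b, g b a = -g a b) {c₀ d₀ : Fin n} (hne : g c₀ d₀ ≠ 0)
    (heig : ∀ c d, z * g c d = -(1 / 4) * ∑ a, ∑ b, g a b * pairCorr a b c d) :
    ∃ m : ℤ, z = m := by
  set h : Fin n → ℂ := fun c => ∑ b, g c b with hh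
  have hcol : ∀ c, ∑ a, g a c = -h c := fun c => by
    rw [hh, ← sum_neg_distrib]
    exact sum_congr rfl fun a _ => hanti c a
  have key : ∀ c d, z * g c d = -((n.factorial : ℂ) / 6) * (h c - h d + g c d) := by
    intro c d
    rw [heig]
    have e : ∑ a, ∑ b, g a b * pairCorr a b c d = (n.factorial : ℂ) / 3 *
        (∑ b, g c b + ∑ a, g a d - ∑ b, g d b - ∑ a, g a c + g c d - g d c) := by
      have e1 : ∀ a b, g a b * pairCorr a b c d = (n.factorial : ℂ) / 3 *
          ((if a = c then g a b else 0) + (if b = d then g a b else 0)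
            - (if a = d then g a b else 0) - (if b = c then g a b else 0)
            + (if a = c then (if b = d then g a b else 0) else 0)
            - (if a = d then (if b = c then g a b else 0) else 0)) := by
        intro a b
        rw [pairCorr_eq]
        split_ifs <;> ring
      simp only [e1, ← mul_sum]
      congr 1
      simp only [sum_add_distrib, sum_sub_distrib]
      have e2 : ∀ x, ∑ a, ∑ b, (if a = x then g a b else 0) = ∑ b, g x b := fun x => by
        rw [sum_comm]; simp
      have e3 : ∀ x y, ∑ a, ∑ b, (if a = x then (if b = y then g a b else 0) else 0) = g x y :=
        fun x y => by
          rw [sum_eq_single x]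
          · simp
          · intro a _ ha; simp [ha]
          · simp
      simp only [e2, e3]
      simp
    rw [e, hcol, hcol, hanti c d]
    simp only [hh]
    ring
  have hsum : ∑ c, h c = 0 := by
    have h1 : ∑ c, h c = -∑ c, h c := by
      rw [← sum_neg_distrib]
      conv_lhs => rw [hh, sum_comm]
      exact sum_congr rfl fun c _ => hcol c
    linear_combination (1 / 2 : ℂ) * h1
  have keyh : ∀ c, z * h c = -(((n + 1).factorial : ℂ) / 6) * h c := by
    intro c
    have e : z * h c = ∑ d, -((n.factorial : ℂ) / 6) * (h c - h d + g c d) := by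
      rw [hh, mul_sum]
      exact sum_congr rfl fun d _ => key c d
    rw [e, ← mul_sum, sum_add_distrib, sum_sub_distrib, hsum, Nat.factorial_succ]
    simp only [sum_const, card_univ, Fintype.card_fin, nsmul_eq_mul]
    push_cast
    change _ * (_ - 0 + h c) = _
    ring
  have hdiag : ∀ a, g a a = 0 := fun a => by
    linear_combination (1 / 2 : ℂ) * hanti a a
  have hcd : c₀ ≠ d₀ := by
    rintro rfl
    exact hne (hdiag _)
  have hn2 : 2 ≤ n := by
    by_contra hlt
    exact hcd (Fin.ext (by omega))
  by_cases hall : ∀ c, h c = 0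
  · have hz : z = -(n.factorial : ℂ) / 6 := by
      have := key c₀ d₀
      rw [hall, hall] at this
      apply mul_right_cancel₀ hne
      rw [this]
      ring
    by_cases hn3 : 3 ≤ n
    · exact exists_int_of_six_dvd (Nat.factorial_dvd_factorial hn3) hz
    · -- For `n = 2` the row sum `h c₀` has `g c₀ d₀` as its only nonzero term.
      exfalso
      apply hne
      rw [← hall c₀, hh]
      symm
      apply sum_eq_single_of_mem d₀ (mem_univ _)
      intro b _ hb
      have hbc : b = c₀ := by
        have : (c₀ : ℕ) ≠ d₀ := fun h => hcd (Fin.ext h)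
        have : (b : ℕ) ≠ d₀ := fun h => hb (Fin.ext h)
        exact Fin.ext (by omega)
      rw [hbc, hdiag]
  · push Not at hall
    obtain ⟨c, hc⟩ := hall
    have hz : z = -((n + 1).factorial : ℂ) / 6 := by
      apply mul_right_cancel₀ hc
      rw [keyh]
      ring
    have h3 : 3 ≤ n + 1 := by omega
    exact exists_int_of_six_dvd (Nat.factorial_dvd_factorial h3) hz

/-- Every complex eigenvalue of the `n!×n!` matrix
`(inv(σ∘τ⁻¹))_{σ,τ ∈ S_n}` is an integer. -/
theorem inversion_matrix_integer_spectrum (n : ℕ) (hn : 1 ≤ n) (z : ℂ)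
    (hz : (Matrix.charpoly (Matrix.of (fun σ τ : Equiv.Perm (Fin n) =>
      (invCount n (σ * τ⁻¹) : ℂ)))).IsRoot z) :
    ∃ m : ℤ, z = m := by
  rw [Polynomial.IsRoot.def, Matrix.eval_charpoly] at hz
  obtain ⟨f, hf0, hf⟩ := Matrix.exists_mulVec_eq_zero_iff.mpr hz
  have heq : ∀ σ, z * f σ = ∑ τ, (invCount n (σ * τ⁻¹) : ℂ) * f τ := by
    intro σ
    have := congrFun hf σ
    rw [Matrix.sub_mulVec] at this
    simp only [Matrix.scalar_apply, Pi.sub_apply, Matrix.mulVec_diagonal, Pi.zero_apply] at this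
    simpa [Matrix.mulVec, dotProduct] using sub_eq_zero.mp this
  by_cases hS : ∑ τ, f τ = 0
  · set g : Fin n → Fin n → ℂ := fun a b => ∑ τ, pairSign τ a b * f τ with hg
    have hgram : ∀ σ, z * f σ = -(1 / 4) * ∑ a, ∑ b, pairSign σ a b * g a b := by
      intro σ
      set Q : ℂ := ∑ a : Fin n, ∑ b : Fin n, if a = b then (0 : ℂ) else 1 with hQ
      have e1 : ∀ τ, (invCount n (σ * τ⁻¹) : ℂ) * f τ = Q / 4 * f τ
          - 1 / 4 * ∑ a, ∑ b, pairSign σ a b * (pairSign τ a b * f τ) := by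
        intro τ
        have e2 : ∑ a, ∑ b, pairSign σ a b * (pairSign τ a b * f τ)
            = (∑ a, ∑ b, pairSign σ a b * pairSign τ a b) * f τ := by
          simp only [sum_mul, mul_assoc]
        rw [e2]
        linear_combination (f τ / 4) * four_mul_invCount σ τ
      rw [heq, sum_congr rfl fun τ _ => e1 τ, sum_sub_distrib, ← mul_sum, hS, ← mul_sum]
      have e3 : ∑ τ, ∑ a, ∑ b, pairSign σ a b * (pairSign τ a b * f τ)
          = ∑ a, ∑ b, pairSign σ a b * g a b := by
        rw [sum_comm]
        refine sum_congr rfl fun a _ => ?_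
        rw [sum_comm]
        refine sum_congr rfl fun b _ => ?_
        rw [hg, mul_sum]
      rw [e3]
      ring
    by_cases hz0 : z = 0
    · exact ⟨0, by simp [hz0]⟩
    have hgne : ∃ c d, g c d ≠ 0 := by
      by_contra! hcon
      apply hf0
      funext σ
      have := hgram σ
      simpa [hcon, hz0] using this
    obtain ⟨c₀, d₀, hne⟩ := hgne
    refine int_of_pair_eigen g ?_ hne ?_
    · intro a b
      simp only [hg, ← sum_neg_distrib]
      exact sum_congr rfl fun τ _ => by rw [pairSign_swap τ a b]; ring
    · intro c d
      have e1 : z * g c d = ∑ σ, pairSign σ c d * (z * f σ) := by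
        rw [hg, mul_sum]
        exact sum_congr rfl fun σ _ => by ring
      rw [e1]
      simp only [hgram, mul_sum]
      rw [sum_comm]
      refine sum_congr rfl fun a _ => ?_
      rw [sum_comm]
      refine sum_congr rfl fun b _ => ?_
      rw [pairCorr, mul_sum, mul_sum]
      exact sum_congr rfl fun σ _ => by ring
  · refine ⟨∑ w : Equiv.Perm (Fin n), (invCount n w : ℤ), ?_⟩
    apply mul_right_cancel₀ hS
    rw [mul_sum, sum_congr rfl fun σ _ => heq σ, sum_comm, mul_sum]
    refine sum_congr rfl fun τ _ => ?_
    rw [← sum_mul]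
    congr 1
    push_cast
    exact Fintype.sum_equiv (Equiv.mulRight τ⁻¹) _ _ fun σ => rfl
end

section
/- Let A be a finite set and let i, j, k be natural numbers with 0 ≤ i ≤ j ≤ k. Then as linear maps from ℝ⟨A,k⟩ to ℝ⟨A,i⟩ one has δ(A,j,i) ∘ δ(A,k,j) = C(k−i, j−i) · δ(A,k,i), where C(k−i, j−i) is the binomial coefficient. -/
/-!
The `(u, w)` matrix entry of the composite counts the pairs `(s, t)` consisting of a set `s` of
`j` positions in `w` and a set `t` of `i` positions in the subword of `w` at `s`, such that the
resulting subword of a subword is `u`. Pushing `t` forward along the increasing enumeration of `s`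
turns it into a set `r ⊆ s` of `i` positions of `w`, and the iterated subword is the subword of `w`
at `r` (`sum_subwordInd_subword`). Each `r` lies in exactly `C(k - i, j - i)` sets `s` of
size `j` (`card_filter_superset`), so double counting the pairs `r ⊆ s` gives the claim.
-/

/-- An injective word of length `i` over the alphabet `A`:
a sequence of `i` pairwise distinct letters of `A`. -/
abbrev InjWord (A : Type*) (i : ℕ) : Type _ := {w : Fin i → A // Function.Injective w}

/-- The length-`i` subword of an injective word `w` of length `j` indexed by a subset
`s ⊆ Fin j` of cardinality `i` (the letters are taken in order). -/
def subword {A : Type*} {j i : ℕ} (w : InjWord A j) (s : Finset (Fin j))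
    (hs : s.card = i) : InjWord A i :=
  ⟨fun t => w.1 ((s.orderIsoOfFin hs t : Fin j)),
    fun _ _ hab => (s.orderIsoOfFin hs).injective (Subtype.val_injective (w.2 hab))⟩

/-- The linear map `δ(A,j,i) : ℝ⟨A,i⟩ → ℝ⟨A,i⟩` on the free real vector space with basis
the injective words, sending a word of length `j` to the sum of all of its length-`i`
subwords (subsequences taken in order). -/
noncomputable def delta (A : Type*) [Fintype A] [DecidableEq A] (j i : ℕ) :
    (InjWord A j → ℝ) →ₗ[ℝ] (InjWord A i → ℝ) :=
  Matrix.mulVecLin (Matrix.of fun (u : InjWord A i) (w : InjWord A j) =>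
    (((Finset.powersetCard i (Finset.univ : Finset (Fin j))).attach.filter
      (fun s => subword w s.1 (Finset.mem_powersetCard.mp s.2).2 = u)).card : ℝ))

/-- The indicator of the event that `s` has `i` elements and the subword of `w` at the positions
`s` is `u`. Making the cardinality part of the event gives a function of a plain finset. -/
noncomputable def subwordInd {A : Type*} [DecidableEq A] {j i : ℕ} (w : InjWord A j)
    (u : InjWord A i) (s : Finset (Fin j)) : ℝ :=
  if h : s.card = i then (if subword w s h = u then 1 else 0) else 0

theorem card_subword_eq_sum {A : Type*} [DecidableEq A] {j i : ℕ} (w : InjWord A j)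
    (u : InjWord A i) :
    (((Finset.powersetCard i (Finset.univ : Finset (Fin j))).attach.filter
      (fun s => subword w s.1 (Finset.mem_powersetCard.mp s.2).2 = u)).card : ℝ) =
      ∑ s ∈ Finset.powersetCard i (Finset.univ : Finset (Fin j)), subwordInd w u s := by
  rw [← Finset.sum_attach, Finset.card_filter, Nat.cast_sum]
  refine Finset.sum_congr rfl fun s _ => ?_
  rw [subwordInd, dif_pos (Finset.mem_powersetCard.mp s.2).2]
  split_ifs <;> simp

/-- A subword of a subword is a subword, at the pushed-forward set of positions. -/
theorem subword_subword {A : Type*} {k j i : ℕ} (w : InjWord A k) (s : Finset (Fin k))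
    (hs : s.card = j) (t : Finset (Fin j)) (ht : t.card = i)
    (ht' : (t.map (s.orderEmbOfFin hs).toEmbedding).card = i) :
    subword (subword w s hs) t ht = subword w (t.map (s.orderEmbOfFin hs).toEmbedding) ht' := by
  -- the increasing enumeration of a finite set is unique
  have key : (fun x => s.orderEmbOfFin hs (t.orderEmbOfFin ht x)) =
      (t.map (s.orderEmbOfFin hs).toEmbedding).orderEmbOfFin ht' := by
    apply Finset.orderEmbOfFin_unique
    · intro x
      exact Finset.mem_map_of_mem _ (Finset.orderEmbOfFin_mem t ht x)
    · exact (s.orderEmbOfFin hs).strictMono.comp (t.orderEmbOfFin ht).strictMono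
  apply Subtype.ext
  funext x
  exact congrArg w.1 (congrFun key x)

/-- Counting occurrences of `u` in the subword of `w` at `s` amounts to counting occurrences of `u`
in `w` at sets of positions contained in `s`. -/
theorem sum_subwordInd_subword {A : Type*} [DecidableEq A] {k j i : ℕ} (w : InjWord A k)
    (u : InjWord A i) (s : Finset (Fin k)) (hs : s.card = j) :
    ∑ t ∈ Finset.powersetCard i (Finset.univ : Finset (Fin j)), subwordInd (subword w s hs) u t =
      ∑ r ∈ Finset.powersetCard i s, subwordInd w u r := by
  have h : s = Finset.univ.map (s.orderEmbOfFin hs).toEmbedding :=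
    (Finset.map_orderEmbOfFin_univ s hs).symm
  conv_rhs => rw [h, Finset.powersetCard_map, Finset.sum_map]
  refine Finset.sum_congr rfl fun t ht => ?_
  have ht1 : t.card = i := (Finset.mem_powersetCard.mp ht).2
  have ht2 : (t.map (s.orderEmbOfFin hs).toEmbedding).card = i := by rw [Finset.card_map, ht1]
  change subwordInd (subword w s hs) u t =
    subwordInd w u (t.map (s.orderEmbOfFin hs).toEmbedding)
  unfold subwordInd
  rw [dif_pos ht1, dif_pos ht2, subword_subword w s hs t ht1 ht2]

theorem card_filter_superset {k i j : ℕ} (hij : i ≤ j) (r : Finset (Fin k)) (hr : r.card = i) :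
    ((Finset.powersetCard j (Finset.univ : Finset (Fin k))).filter (r ⊆ ·)).card =
      (k - i).choose (j - i) := by
  have hc : rᶜ.card = k - i := by rw [Finset.card_compl, hr, Fintype.card_fin]
  rw [← hc, ← Finset.card_powersetCard]
  refine Finset.card_nbij' (fun s => s \ r) (fun s => s ∪ r) ?_ ?_ ?_ ?_
  · intro s hs
    simp only [Finset.coe_filter, Finset.mem_powersetCard, Set.mem_ofPred_eq] at hs
    simp only [Finset.mem_coe, Finset.mem_powersetCard]
    refine ⟨fun x hx => ?_, ?_⟩
    · simp_all
    · rw [Finset.card_sdiff_of_subset hs.2, hs.1.2, hr]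
  · intro s hs
    simp only [Finset.mem_coe, Finset.mem_powersetCard] at hs
    simp only [Finset.coe_filter, Finset.mem_powersetCard, Set.mem_ofPred_eq]
    have hd : Disjoint s r := Finset.subset_compl_iff_disjoint_right.mp hs.1
    refine ⟨⟨Finset.subset_univ _, ?_⟩, Finset.subset_union_right⟩
    rw [Finset.card_union_of_disjoint hd, hs.2, hr]
    omega
  · intro s hs
    simp only [Finset.coe_filter, Set.mem_ofPred_eq] at hs
    exact Finset.sdiff_union_of_subset hs.2
  · intro s hs
    simp only [Finset.mem_coe, Finset.mem_powersetCard] at hs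
    exact Finset.union_sdiff_cancel_right (Finset.subset_compl_iff_disjoint_right.mp hs.1)

/-- Double counting of the pairs `r ⊆ s` with `r` of size `i` and `s` of size `j`. -/
theorem sum_sum_powersetCard {k i j : ℕ} (hij : i ≤ j) (F : Finset (Fin k) → ℝ) :
    ∑ s ∈ Finset.powersetCard j (Finset.univ : Finset (Fin k)),
      ∑ r ∈ Finset.powersetCard i s, F r =
    ((k - i).choose (j - i) : ℝ) *
      ∑ r ∈ Finset.powersetCard i (Finset.univ : Finset (Fin k)), F r := by
  rw [Finset.sum_comm' (t' := Finset.powersetCard i Finset.univ)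
    (s' := fun r => (Finset.powersetCard j Finset.univ).filter (r ⊆ ·))]
  · rw [Finset.mul_sum]
    refine Finset.sum_congr rfl fun r hr => ?_
    rw [Finset.sum_const, card_filter_superset hij r (Finset.mem_powersetCard.mp hr).2,
      nsmul_eq_mul]
  · intro s r
    simp only [Finset.mem_powersetCard, Finset.mem_filter, Finset.subset_univ, true_and]
    tauto

/-- Summing over the intermediate word `v` substitutes `v = subword w s`. -/
theorem sum_mul_subwordInd {A : Type*} [Fintype A] [DecidableEq A] {k j : ℕ} (w : InjWord A k)
    (s : Finset (Fin k)) (hs : s.card = j) (G : InjWord A j → ℝ) :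
    ∑ v, G v * subwordInd w v s = G (subword w s hs) := by
  simp [subwordInd, hs]

/-- `δ(A,j,i) ∘ δ(A,k,j) = C(k−i, j−i) · δ(A,k,i)`. -/
theorem delta_comp_delta (A : Type*) [Fintype A] [DecidableEq A]
    (i j k : ℕ) (hij : i ≤ j) (hjk : j ≤ k) :
    (delta A j i).comp (delta A k j) = ((k - i).choose (j - i) : ℝ) • delta A k i := by
  have hsmul : ∀ (c : ℝ) (M : Matrix (InjWord A i) (InjWord A k) ℝ),
      c • M.mulVecLin = (c • M).mulVecLin := fun c M => by
    ext1 x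
    simp
  unfold delta
  rw [← Matrix.mulVecLin_mul, hsmul]
  congr 1
  ext u w
  simp only [Matrix.mul_apply, Matrix.smul_apply, Matrix.of_apply, smul_eq_mul,
    card_subword_eq_sum]
  rw [← sum_sum_powersetCard hij]
  simp_rw [Finset.mul_sum]
  rw [Finset.sum_comm]
  refine Finset.sum_congr rfl fun s hs => ?_
  have hs' : s.card = j := (Finset.mem_powersetCard.mp hs).2
  rw [sum_mul_subwordInd w s hs', sum_subwordInd_subword]
end

section
/- For every n ≥ 1, the kernel of the linear map δ({1,…,n}, n, n−1) : ℝ⟨{1,…,n}, n⟩ → ℝ⟨{1,…,n}, n−1⟩ has dimension equal to d_n, the number of derangements (fixed-point-free permutations) in S_n. -/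
/-! ### The matrices `M_k` and their products -/

/-- The permutation `σ` is increasing on the (zero-based) positions `≥ k`. -/
def IncrFrom {n : ℕ} (k : ℕ) (σ : Equiv.Perm (Fin n)) : Prop :=
  ∀ i j : Fin n, k ≤ i.val → i < j → σ i < σ j

open Classical in
/-- The matrix `M_k` whose entry at `(w, v)` is `1` if the letters of `w` at the (zero-based)
positions `≥ k` occur in the same relative order in `v`, and `0` otherwise. It represents
multiplication by `∑ σ`, over the `σ` increasing from position `k` on, in the group algebra of
`S_n`; `M_1` is the top-to-random shuffle. -/
noncomputable def topMat (n k : ℕ) : Matrix (Equiv.Perm (Fin n)) (Equiv.Perm (Fin n)) ℝ :=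
  Matrix.of fun w v => if IncrFrom k (v⁻¹ * w) then 1 else 0

lemma cycleRange_lt_iff {m : ℕ} (i a b : Fin (m + 1)) (ha : a ≠ i) (hb : b ≠ i) :
    i.cycleRange a < i.cycleRange b ↔ a < b := by
  obtain ⟨a, rfl⟩ := Fin.exists_succAbove_eq ha
  obtain ⟨b, rfl⟩ := Fin.exists_succAbove_eq hb
  simp [Fin.cycleRange_succAbove]

/-- `(cycleRange i)⁻¹` sends `0` to `i` and is increasing on the other positions. -/
lemma incrFrom_one_iff {m : ℕ} (σ : Equiv.Perm (Fin (m + 1))) :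
    IncrFrom 1 σ ↔ ∃ i : Fin (m + 1), (i.cycleRange)⁻¹ = σ := by
  constructor
  · intro h
    refine ⟨σ 0, ?_⟩
    have hs : (fun j : Fin m => σ j.succ) = (σ 0).succAbove := by
      refine (StrictMono.range_inj ?_ (Fin.strictMono_succAbove _)).1 ?_
      · intro a b hab
        exact h _ _ (by simp) (by simpa using hab)
      · rw [Fin.range_succAbove]
        ext x
        simp only [Set.mem_range, Set.mem_compl_iff, Set.mem_singleton_iff]
        constructor
        · rintro ⟨y, rfl⟩ h
          exact Fin.succ_ne_zero _ (σ.injective h)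
        · intro hx
          obtain ⟨y, rfl⟩ := σ.surjective x
          obtain ⟨z, rfl⟩ := Fin.exists_succ_eq.2 (show y ≠ 0 from fun h => hx (by rw [h]))
          exact ⟨z, rfl⟩
    ext1 j
    refine Fin.cases ?_ (fun j => ?_) j
    · exact Fin.cycleRange_symm_zero _
    · exact (Fin.cycleRange_symm_succ _ _).trans (congrFun hs j).symm
  · rintro ⟨i, rfl⟩ a b ha hab
    obtain ⟨a, rfl⟩ := Fin.exists_succ_eq.2 (show a ≠ 0 from fun h => by simp [h] at ha)
    obtain ⟨b, rfl⟩ := Fin.exists_succ_eq.2 (show b ≠ 0 from fun h => by simp [h] at hab)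
    change i.cycleRange.symm _ < i.cycleRange.symm _
    rw [Fin.cycleRange_symm_succ, Fin.cycleRange_symm_succ]
    exact Fin.strictMono_succAbove _ (by simpa using hab)

lemma cycleRange_inv_injective {m : ℕ} :
    Function.Injective (fun i : Fin (m + 1) => (i.cycleRange)⁻¹) := by
  intro i j h
  have := congrArg (fun σ : Equiv.Perm (Fin (m + 1)) => σ 0) h
  simpa using this

open Classical in
lemma sum_incrFrom_one {m : ℕ} (f : Equiv.Perm (Fin (m + 1)) → ℝ) :
    ∑ σ, (if IncrFrom 1 σ then f σ else 0) = ∑ i : Fin (m + 1), f (i.cycleRange)⁻¹ := by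
  rw [← Finset.sum_filter]
  symm
  refine Finset.sum_bij (fun i _ => (i.cycleRange)⁻¹) ?_ ?_ ?_ ?_
  · intro i _
    simpa using (incrFrom_one_iff _).2 ⟨i, rfl⟩
  · intro i _ j _ h
    exact cycleRange_inv_injective h
  · intro σ hσ
    obtain ⟨i, hi⟩ := (incrFrom_one_iff σ).1 (by simpa using hσ)
    exact ⟨i, Finset.mem_univ _, hi⟩
  · intros; rfl

/-- Composing with `cycleRange (τ j)` turns the value at position `j` into the minimum `0` and keeps
the relative order of the other values. So monotonicity from position `k` on is unaffected if
`j < k`, constrains only the positions after `k` if `j = k`, and fails if `j > k`. -/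
lemma incrFrom_cycleRange_mul_iff {m k : ℕ} (τ : Equiv.Perm (Fin (m + 1))) (j : Fin (m + 1)) :
    IncrFrom k ((τ j).cycleRange * τ) ↔
      (j.val < k ∧ IncrFrom k τ) ∨ (j.val = k ∧ IncrFrom (k + 1) τ) := by
  have key : ∀ a b : Fin (m + 1), a ≠ j → b ≠ j →
      (((τ j).cycleRange * τ) a < ((τ j).cycleRange * τ) b ↔ τ a < τ b) := fun a b ha hb =>
    cycleRange_lt_iff _ _ _ (fun h => ha (τ.injective h)) (fun h => hb (τ.injective h))
  have hj : ((τ j).cycleRange * τ) j = 0 := Fin.cycleRange_self _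
  rcases lt_trichotomy j.val k with h | h | h
  · simp only [h, h.ne, true_and, false_and, or_false]
    refine forall₂_congr fun a b => forall₂_congr fun ha hab => key a b ?_ ?_
    · rintro rfl; omega
    · rintro rfl; have : a.val < b.val := hab; omega
  · simp only [h, lt_irrefl, true_and, false_and, false_or]
    constructor
    · intro H a b ha hab
      have : a.val < b.val := hab
      exact (key a b (by rintro rfl; omega) (by rintro rfl; omega)).1 (H a b (by omega) hab)
    · intro H a b ha hab
      have hab' : a.val < b.val := hab
      have hb : b ≠ j := by rintro rfl; omega
      by_cases haj : a = j
      · subst haj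
        rw [hj, Fin.pos_iff_ne_zero, ← hj]
        exact fun h => hb (((τ a).cycleRange * τ).injective h)
      · have : a.val ≠ j.val := fun h => haj (Fin.ext h)
        exact (key a b haj hb).2 (H a b (by omega) hab)
  · simp only [h.not_gt, h.ne', false_and, or_false, iff_false]
    intro H
    have := H ⟨k, h.trans j.isLt⟩ j le_rfl h
    rw [hj] at this
    exact Fin.not_lt_zero _ this

open Classical in
lemma topMat_mul_apply {m k : ℕ} (w v : Equiv.Perm (Fin (m + 1))) :
    (topMat (m + 1) k * topMat (m + 1) 1) w v =
      ∑ j : Fin (m + 1), if (j.val < k ∧ IncrFrom k (v⁻¹ * w)) ∨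
        (j.val = k ∧ IncrFrom (k + 1) (v⁻¹ * w)) then (1 : ℝ) else 0 := by
  rw [Matrix.mul_apply, ← Equiv.sum_comp (Equiv.mulLeft v)]
  simp only [topMat, Matrix.of_apply, Equiv.coe_mulLeft, inv_mul_cancel_left, mul_ite, mul_one,
    mul_zero]
  rw [sum_incrFrom_one, ← Equiv.sum_comp (v⁻¹ * w)]
  refine Finset.sum_congr rfl fun j _ => ?_
  simp only [← incrFrom_cycleRange_mul_iff (v⁻¹ * w) j, mul_inv_rev, inv_inv, mul_assoc]

lemma topMat_mul {m k : ℕ} (hk : k < m + 1) :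
    topMat (m + 1) k * topMat (m + 1) 1 =
      (k : ℝ) • topMat (m + 1) k + topMat (m + 1) (k + 1) := by
  classical
  ext w v
  rw [topMat_mul_apply]
  have : ∀ j : Fin (m + 1), (if (j.val < k ∧ IncrFrom k (v⁻¹ * w)) ∨
        (j.val = k ∧ IncrFrom (k + 1) (v⁻¹ * w)) then (1 : ℝ) else 0) =
      (if j < (⟨k, hk⟩ : Fin (m + 1)) then (if IncrFrom k (v⁻¹ * w) then 1 else 0) else 0) +
      (if j = (⟨k, hk⟩ : Fin (m + 1)) then (if IncrFrom (k + 1) (v⁻¹ * w) then 1 else 0) else 0) := by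
    intro j
    simp only [Fin.lt_def, Fin.ext_iff]
    rcases lt_trichotomy j.val k with h | h | h
    · simp [h, h.ne]
    · simp [h]
    · simp [h.not_gt, h.ne']
  simp only [this, Finset.sum_add_distrib, Finset.sum_ite_eq', Finset.mem_univ, if_true]
  rw [← Finset.sum_filter, Finset.sum_const, Finset.filter_gt_eq_Iio, Fin.card_Iio]
  simp [topMat]

/-- The boundary case `k = n` of `topMat_mul`, where the summand `M_{k+1}` disappears. -/
lemma topMat_mul_top (m : ℕ) :
    topMat (m + 1) (m + 1) * topMat (m + 1) 1 =
      ((m + 1 : ℕ) : ℝ) • topMat (m + 1) (m + 1) := by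
  classical
  ext w v
  rw [topMat_mul_apply]
  have : ∀ j : Fin (m + 1), j.val ≠ m + 1 := fun j => j.isLt.ne
  simp only [this, Fin.is_lt, true_and, false_and, or_false, Finset.sum_const, Finset.card_univ,
    Fintype.card_fin]
  simp [topMat]

lemma topMat_zero (n : ℕ) : topMat n 0 = 1 := by
  classical
  ext w v
  have : IncrFrom 0 (v⁻¹ * w) ↔ w = v := by
    constructor
    · intro h
      have h1 : StrictMono (v⁻¹ * w) := fun a b hab => h a b (Nat.zero_le _) hab
      have h2 : (⇑(v⁻¹ * w) : Fin n → Fin n) = id :=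
        (StrictMono.range_inj h1 strictMono_id).1
          (by rw [(Equiv.surjective _).range_eq, Set.range_id])
      have h3 : v⁻¹ * w = 1 := by ext1 x; exact congrFun h2 x
      exact (inv_mul_eq_one.1 h3).symm
    · rintro rfl i j _ hij
      simpa using hij
  simp [topMat, this, Matrix.one_apply]

lemma trace_topMat (n k : ℕ) : (topMat n k).trace = (n.factorial : ℝ) := by
  have h : IncrFrom k (1 : Equiv.Perm (Fin n)) := fun i j _ hij => hij
  simp [Matrix.trace, topMat, h, Fintype.card_perm]

/-! ### The projection onto the kernel of `M_1` -/

/-- The matrix `E = ∑ k ≤ n, (-1)^k / k! • M_k`, which is the projection onto the kernel of `M_1`.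
Since `M_k = M_1 (M_1 - 1) ⋯ (M_1 - (k - 1))`, it is the polynomial `∑ (-1)^k (x choose k)` in
`M_1`, which takes the value `1` at `0` and `0` at `1, …, n`. -/
noncomputable def kerProj (n : ℕ) : Matrix (Equiv.Perm (Fin n)) (Equiv.Perm (Fin n)) ℝ :=
  ∑ k ∈ Finset.range (n + 1), ((-1 : ℝ) ^ k / k.factorial) • topMat n k

lemma topMat_commute {m k : ℕ} (hk : k ≤ m + 1) :
    Commute (topMat (m + 1) k) (topMat (m + 1) 1) := by
  induction k with
  | zero => rw [topMat_zero]; exact Commute.one_left _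
  | succ k ih =>
    have h := ih (by omega)
    rw [← sub_eq_of_eq_add' (topMat_mul (m := m) (k := k) (by omega))]
    exact (h.mul_left (Commute.refl _)).sub_left (h.smul_left _)

lemma kerProj_mul (m : ℕ) : kerProj (m + 1) * topMat (m + 1) 1 = 0 := by
  -- By `topMat_mul`, the sum of the first `r` terms telescopes to a multiple of `M_r`.
  have h : ∀ r ≤ m + 1, (∑ k ∈ Finset.range r, ((-1 : ℝ) ^ k / k.factorial) • topMat (m + 1) k) *
      topMat (m + 1) 1 = (-((-1 : ℝ) ^ r * r / r.factorial)) • topMat (m + 1) r := by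
    intro r
    induction r with
    | zero => simp
    | succ r ih =>
      intro hr
      rw [Finset.sum_range_succ, add_mul, ih (by omega), smul_mul_assoc, topMat_mul (by omega),
        smul_add, smul_smul, ← add_assoc, ← add_smul]
      have h0 : (r.factorial : ℝ) ≠ 0 := by positivity
      have h1 : -((-1 : ℝ) ^ r * r / r.factorial) + (-1) ^ r / r.factorial * r = 0 := by ring
      rw [h1, zero_smul, zero_add, Nat.factorial_succ]
      congr 1
      push_cast
      field_simp
      ring
  rw [kerProj, Finset.sum_range_succ, add_mul, h _ le_rfl, smul_mul_assoc, topMat_mul_top,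
    smul_smul, ← add_smul]
  convert zero_smul ℝ _
  ring

lemma kerProj_commute (m : ℕ) : Commute (kerProj (m + 1)) (topMat (m + 1) 1) :=
  Commute.sum_left _ _ _ fun k hk =>
    (topMat_commute (by simpa [Nat.lt_succ_iff] using hk)).smul_left _

lemma topMat_mulVec_eq_zero {m k : ℕ} (hk : k ≤ m) {x : Equiv.Perm (Fin (m + 1)) → ℝ}
    (hx : (topMat (m + 1) 1).mulVec x = 0) : (topMat (m + 1) (k + 1)).mulVec x = 0 := by
  induction k with
  | zero => exact hx
  | succ k ih =>
    rw [← sub_eq_of_eq_add' (topMat_mul (m := m) (k := k + 1) (by omega)), Matrix.sub_mulVec,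
      ← Matrix.mulVec_mulVec, hx, Matrix.smul_mulVec, ih (by omega)]
    simp

lemma kerProj_mulVec {m : ℕ} {x : Equiv.Perm (Fin (m + 1)) → ℝ}
    (hx : (topMat (m + 1) 1).mulVec x = 0) : (kerProj (m + 1)).mulVec x = x := by
  rw [kerProj, Finset.sum_range_succ', Matrix.add_mulVec, Matrix.sum_mulVec,
    Finset.sum_eq_zero]
  · simp [topMat_zero]
  · intro k hk
    rw [Matrix.smul_mulVec, topMat_mulVec_eq_zero (by simpa [Nat.lt_succ_iff] using hk) hx,
      smul_zero]

lemma trace_kerProj (n : ℕ) : (kerProj n).trace = (numDerangements n : ℝ) := by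
  have h : (numDerangements n : ℝ) = ((numDerangements n : ℤ) : ℝ) := by simp
  rw [h, numDerangements_sum, kerProj, Matrix.trace_sum]
  push_cast
  refine Finset.sum_congr rfl fun k hk => ?_
  have hk' : k ≤ n := by simpa [Nat.lt_succ_iff] using hk
  rw [Matrix.trace_smul, trace_topMat]
  have h1 := Nat.factorial_mul_ascFactorial k (n - k)
  rw [Nat.add_sub_cancel' hk'] at h1
  have h0 : (k.factorial : ℝ) ≠ 0 := by positivity
  rw [← h1]
  push_cast
  rw [smul_eq_mul]
  field_simp

lemma finrank_ker_topMat (m : ℕ) :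
    Module.finrank ℝ (LinearMap.ker (topMat (m + 1) 1).mulVecLin) = numDerangements (m + 1) := by
  have hp : LinearMap.IsProj (LinearMap.ker (topMat (m + 1) 1).mulVecLin)
      (kerProj (m + 1)).mulVecLin := by
    constructor
    · intro x
      simp only [LinearMap.mem_ker, Matrix.mulVecLin_apply, Matrix.mulVec_mulVec]
      rw [← (kerProj_commute m).eq, kerProj_mul, Matrix.zero_mulVec]
    · intro x hx
      exact kerProj_mulVec hx
  have h := hp.trace
  rw [← Matrix.toLin'_apply', Matrix.trace_toLin'_eq, trace_kerProj] at h
  exact_mod_cast h.symm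

/-! ### Comparison of `δ` with `M_1` -/

/-- Permutations of `Fin n` are the injective words of length `n` over `Fin n`. -/
noncomputable def permWord (n : ℕ) : Equiv.Perm (Fin n) ≃ InjWord (Fin n) n where
  toFun w := ⟨w, w.injective⟩
  invFun w := Equiv.ofBijective w.1 (Finite.injective_iff_bijective.1 w.2)
  left_inv w := by ext; rfl
  right_inv w := rfl

/-- Deleting position `i` from `v` gives the word `w` without its first letter if and only if moving
the letter of `v` at position `i` to the front gives `w`. -/
lemma subword_eq_iff {m : ℕ} (w v : Equiv.Perm (Fin (m + 1))) (i : Fin (m + 1))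
    (h : ({i}ᶜ : Finset (Fin (m + 1))).card = m) (u : InjWord (Fin (m + 1)) m)
    (hu : ∀ j, u.1 j = w j.succ) :
    subword (permWord _ v) {i}ᶜ h = u ↔ (i.cycleRange)⁻¹ = v⁻¹ * w := by
  have h1 : ∀ j, (subword (permWord _ v) {i}ᶜ h).1 j = v (i.succAbove j) := by
    intro j
    change v (({i}ᶜ : Finset (Fin (m + 1))).orderEmbOfFin h j) = _
    rw [Finset.orderEmbOfFin_compl_singleton_apply]
    rfl
  have h2 : subword (permWord _ v) {i}ᶜ h = u ↔ ∀ j : Fin m, v (i.succAbove j) = w j.succ := by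
    rw [Subtype.ext_iff, funext_iff]
    simp only [h1, hu]
  rw [h2, eq_inv_mul_iff_mul_eq]
  have h3 : ∀ j : Fin m, (v * (i.cycleRange)⁻¹) j.succ = v (i.succAbove j) := fun j =>
    congrArg v (Fin.cycleRange_symm_succ _ _)
  simp only [← h3]
  constructor
  · intro H
    -- Two permutations agreeing at all positions but one are equal.
    set ρ := v * (i.cycleRange)⁻¹
    have h0 : ρ 0 = w 0 := by
      obtain ⟨y, hy⟩ := ρ.surjective (w 0)
      by_cases hy0 : y = 0
      · rw [← hy, hy0]
      · obtain ⟨z, rfl⟩ := Fin.exists_succ_eq.2 hy0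
        rw [H] at hy
        exact absurd (w.injective hy) (Fin.succ_ne_zero z)
    ext1 j
    exact Fin.cases h0 H j
  · intro H j
    rw [H]

/-- The row of `δ` indexed by `w` without its first letter is the row of `M_1` indexed by `w`. -/
lemma card_subword_eq {m : ℕ} (w v : Equiv.Perm (Fin (m + 1)))
    (u : InjWord (Fin (m + 1)) m) (hu : ∀ j, u.1 j = w j.succ) :
    (((Finset.powersetCard m (Finset.univ : Finset (Fin (m + 1)))).attach.filter
      (fun s => subword (permWord _ v) s.1 (Finset.mem_powersetCard.mp s.2).2 = u)).card : ℝ) =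
      topMat (m + 1) 1 w v := by
  classical
  have hc : ∀ i : Fin (m + 1), ({i}ᶜ : Finset (Fin (m + 1))).card = m := fun i => by
    simp [Finset.card_compl]
  have h1 : ((Finset.powersetCard m (Finset.univ : Finset (Fin (m + 1)))).attach.filter
      (fun s => subword (permWord _ v) s.1 (Finset.mem_powersetCard.mp s.2).2 = u)).card =
      (Finset.univ.filter fun i : Fin (m + 1) => (i.cycleRange)⁻¹ = v⁻¹ * w).card := by
    symm
    refine Finset.card_bij (fun i _ => ⟨{i}ᶜ, Finset.mem_powersetCard.2
      ⟨Finset.subset_univ _, hc i⟩⟩) ?_ ?_ ?_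
    · intro i hi
      simp only [Finset.mem_filter, Finset.mem_attach, true_and]
      exact (subword_eq_iff w v i (hc i) u hu).2 (by simpa using hi)
    · intro i _ j _ h
      simpa using h
    · rintro ⟨s, hs⟩ h
      obtain ⟨i, hi⟩ : ∃ i, sᶜ = {i} := by
        rw [← Finset.card_eq_one, Finset.card_compl, (Finset.mem_powersetCard.1 hs).2]
        simp
      obtain rfl : s = {i}ᶜ := by rw [← hi, compl_compl]
      simp only [Finset.mem_filter, Finset.mem_attach, true_and] at h
      exact ⟨i, by simpa using (subword_eq_iff w v i (hc i) u hu).1 h, rfl⟩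
  rw [h1, topMat, Matrix.of_apply]
  by_cases h : IncrFrom 1 (v⁻¹ * w)
  · rw [if_pos h]
    obtain ⟨i, hi⟩ := (incrFrom_one_iff _).1 h
    have : (Finset.univ.filter fun i : Fin (m + 1) => (i.cycleRange)⁻¹ = v⁻¹ * w) = {i} := by
      ext j
      simp only [Finset.mem_filter, Finset.mem_univ, true_and, Finset.mem_singleton, ← hi]
      exact cycleRange_inv_injective.eq_iff
    rw [this]; simp
  · rw [if_neg h]
    rw [incrFrom_one_iff] at h
    push Not at h
    simp [h]

lemma delta_apply_eq {m : ℕ} (x : InjWord (Fin (m + 1)) (m + 1) → ℝ)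
    (w : Equiv.Perm (Fin (m + 1))) (u : InjWord (Fin (m + 1)) m) (hu : ∀ j, u.1 j = w j.succ) :
    delta (Fin (m + 1)) (m + 1) m x u =
      (topMat (m + 1) 1).mulVec (fun v => x (permWord _ v)) w := by
  rw [delta, Matrix.mulVecLin_apply, Matrix.mulVec, Matrix.mulVec, dotProduct, dotProduct,
    ← Equiv.sum_comp (permWord (m + 1))]
  refine Finset.sum_congr rfl fun v _ => ?_
  rw [Matrix.of_apply, card_subword_eq w v u hu]

lemma delta_eq_zero_iff {m : ℕ} (x : InjWord (Fin (m + 1)) (m + 1) → ℝ) :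
    delta (Fin (m + 1)) (m + 1) m x = 0 ↔
      (topMat (m + 1) 1).mulVec (fun v => x (permWord _ v)) = 0 := by
  constructor
  · intro h
    ext w
    rw [← delta_apply_eq x w ⟨fun j => w j.succ, fun a b hab =>
      Fin.succ_injective _ (w.injective hab)⟩ (fun _ => rfl), h]
    rfl
  · intro h
    ext u
    -- The word `u` misses some letter `a`; prepending it gives a permutation.
    obtain ⟨a, ha⟩ : ∃ a, a ∉ Set.range u.1 := by
      by_contra! H
      have := Fintype.card_le_of_surjective u.1 H
      simp at this
    let w := (permWord (m + 1)).symm ⟨Fin.cons a u.1, Fin.cons_injective_iff.2 ⟨ha, u.2⟩⟩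
    rw [delta_apply_eq x w u (fun _ => rfl), h]
    rfl

/-- The kernel of `δ({1,…,n}, n, n−1)` (with `ℝ⟨{1,…,n},n⟩` having basis `S_n`,
each permutation `w` identified with the injective word `(w 1, …, w n)`)
has dimension `d_n`, the number of derangements in `S_n`. -/
theorem finrank_ker_delta_top (n : ℕ) (hn : 1 ≤ n) :
    Module.finrank ℝ (LinearMap.ker (delta (Fin n) n (n - 1))) =
      (Finset.univ.filter (fun w : Equiv.Perm (Fin n) => ∀ i, w i ≠ i)).card := by
  obtain ⟨m, rfl⟩ : ∃ m, n = m + 1 := ⟨n - 1, by omega⟩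
  have h1 : (Finset.univ.filter (fun w : Equiv.Perm (Fin (m + 1)) => ∀ i, w i ≠ i)).card =
      numDerangements (m + 1) := by
    rw [← card_derangements_fin_eq_numDerangements, ← Fintype.card_subtype]
    exact Fintype.card_congr (Equiv.refl _)
  rw [h1, ← finrank_ker_topMat]
  let Φ := LinearEquiv.funCongrLeft ℝ ℝ (permWord (m + 1))
  have h2 : (LinearMap.ker (delta (Fin (m + 1)) (m + 1) (m + 1 - 1))) =
      (LinearMap.ker (topMat (m + 1) 1).mulVecLin).comap Φ.toLinearMap := by
    ext x
    exact delta_eq_zero_iff x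
  rw [h2]
  exact (Φ.ofSubmodule' _).finrank_eq
end

section
/- For every n ≥ 1, the linear involution of ℝ⟨{1,…,n}, n⟩ induced by reversing words, (a_1,…,a_n) ↦ (a_n,…,a_1), preserves the kernel of δ({1,…,n}, n, n−1). Within this kernel, the (+1)-eigenspace of the reversal involution has dimension equal to the number of derangements in S_n that are even permutations, and the (−1)-eigenspace has dimension equal to the number of derangements in S_n that are odd permutations. -/
/-- The reversal of an injective word: `(a₁,…,a_i) ↦ (a_i,…,a₁)`. -/
def revWord {A : Type*} {i : ℕ} (w : InjWord A i) : InjWord A i :=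
  ⟨fun t => w.1 t.rev, fun _ _ hab => Fin.rev_injective (w.2 hab)⟩

/-- The linear involution of `ℝ⟨A,i⟩` induced by reversing words
(on basis elements, `e_w ↦ e_{reverse of w}`). -/
noncomputable def revMap (A : Type*) (i : ℕ) :
    (InjWord A i → ℝ) →ₗ[ℝ] (InjWord A i → ℝ) :=
  LinearMap.funLeft ℝ ℝ revWord

namespace WordReversal

/-! ### Deletion, insertion and reversal on the free vector space on lists -/

/-- The words in which each letter of `A` occurs exactly once and no other letter occurs. -/
def words {α : Type*} [DecidableEq α] (A : Finset α) : Set (List α) := {l | l.Nodup ∧ l.toFinset = A}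

/-- The linear map `D_a` deleting every occurrence of the letter `a`, on the free vector space
on all lists. -/
noncomputable def del {α : Type*} [DecidableEq α] (a : α) : (List α →₀ ℝ) →ₗ[ℝ] (List α →₀ ℝ) :=
  Finsupp.lmapDomain ℝ ℝ (fun l => l.filter (fun b => b ≠ a))

/-- Word reversal on the free vector space on all lists. -/
noncomputable def rev {α : Type*} : (List α →₀ ℝ) →ₗ[ℝ] (List α →₀ ℝ) :=
  Finsupp.lmapDomain ℝ ℝ List.reverse

/-- The reversal-symmetric section of `D_a`, `w ↦ (aw + wa) / 2`. -/
noncomputable def ins {α : Type*} (a : α) : (List α →₀ ℝ) →ₗ[ℝ] (List α →₀ ℝ) :=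
  (2⁻¹ : ℝ) • (Finsupp.lmapDomain ℝ ℝ (fun l => a :: l) +
    Finsupp.lmapDomain ℝ ℝ (fun l => l ++ [a]))

section

variable {α : Type*}

theorem rev_single (l : List α) (r : ℝ) :
    rev (Finsupp.single l r) = Finsupp.single l.reverse r := by
  simp [rev]

theorem ins_single (a : α) (l : List α) (r : ℝ) :
    ins a (Finsupp.single l r) =
      (2⁻¹ : ℝ) • (Finsupp.single (a :: l) r + Finsupp.single (l ++ [a]) r) := by
  simp [ins]

theorem rev_apply (x : List α →₀ ℝ) (l : List α) : rev x l = x l.reverse := by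
  have := Finsupp.mapDomain_apply (List.reverse_injective (α := α)) x l.reverse
  simpa [rev] using this

theorem rev_rev (x : List α →₀ ℝ) : rev (rev x) = x := by
  ext l; simp [rev_apply]

theorem ins_rev (a : α) (x : List α →₀ ℝ) : ins a (rev x) = rev (ins a x) := by
  induction x using Finsupp.induction_linear with
  | zero => simp
  | add f g hf hg => simp only [map_add, hf, hg]
  | single l r =>
    simp only [rev_single, ins_single, map_smul, map_add, List.reverse_cons, List.reverse_append,
      List.reverse_nil, List.nil_append, List.singleton_append]
    rw [add_comm]

/-- An additive property holds on the span of a set of words once it holds on the multiples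
of its words. -/
theorem supported_induction {s : Set (List α)} {p : (List α →₀ ℝ) → Prop}
    (h0 : p 0) (hadd : ∀ x y, p x → p y → p (x + y))
    (hs : ∀ l ∈ s, ∀ r, p (Finsupp.single l r))
    {x : List α →₀ ℝ} (hx : x ∈ Finsupp.supported ℝ ℝ s) : p x := by
  rw [← Finsupp.sum_single x]
  exact Finset.sum_induction _ p hadd h0 fun l hl => hs l (hx hl) _

end

variable {α : Type*} [DecidableEq α]

theorem del_single (a : α) (l : List α) (r : ℝ) :
    del a (Finsupp.single l r) = Finsupp.single (l.filter (fun b => b ≠ a)) r := by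
  simp [del]

theorem del_rev (a : α) (x : List α →₀ ℝ) : del a (rev x) = rev (del a x) := by
  induction x using Finsupp.induction_linear with
  | zero => simp
  | add f g hf hg => simp only [map_add, hf, hg]
  | single l r => simp only [rev_single, del_single, List.filter_reverse]

theorem del_comm (a b : α) (x : List α →₀ ℝ) : del a (del b x) = del b (del a x) := by
  induction x using Finsupp.induction_linear with
  | zero => simp
  | add f g hf hg => simp only [map_add, hf, hg]
  | single l r => simp only [del_single, List.filter_filter, Bool.and_comm]

theorem del_ins_of_ne {a b : α} (h : a ≠ b) (x : List α →₀ ℝ) :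
    del b (ins a x) = ins a (del b x) := by
  induction x using Finsupp.induction_linear with
  | zero => simp
  | add f g hf hg => simp only [map_add, hf, hg]
  | single l r => 
    simp only [del_single, ins_single, map_smul, map_add, List.filter_append]
    simp [h, -smul_add]

theorem del_ins_self {a : α} {A : Finset α} (ha : a ∉ A) {x : List α →₀ ℝ}
    (hx : x ∈ Finsupp.supported ℝ ℝ (words A)) : del a (ins a x) = x := by
  refine supported_induction (p := fun x => del a (ins a x) = x) (by simp)
    (fun f g hf hg => by simp only [map_add, hf, hg]) (fun l hl r => ?_) hx
  have hal : a ∉ l := by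
    rw [← List.mem_toFinset, hl.2]; exact ha
  have : l.filter (fun b => b ≠ a) = l := by
    rw [List.filter_eq_self]; rintro b hb; simpa using ne_of_mem_of_not_mem hb hal
  rw [ins_single, map_smul, map_add, del_single, del_single, List.filter_append, this]
  rw [List.filter_cons_of_neg (by simp), this, List.filter_cons_of_neg (by simp),
    List.filter_nil, List.append_nil, ← two_smul ℝ, smul_smul]
  norm_num

theorem del_mem {a : α} {A : Finset α} {x : List α →₀ ℝ}
    (hx : x ∈ Finsupp.supported ℝ ℝ (words A)) :
    del a x ∈ Finsupp.supported ℝ ℝ (words (A.erase a)) := by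
  refine supported_induction (p := fun x => del a x ∈ Finsupp.supported ℝ ℝ (words (A.erase a)))
    (by simp) (fun f g hf hg => by simpa only [map_add] using add_mem hf hg)
    (fun l hl r => ?_) hx
  rw [del_single]
  refine Finsupp.single_mem_supported _ _ ⟨hl.1.filter _, ?_⟩
  ext b
  simp [← hl.2, and_comm]

theorem rev_mem {A : Finset α} {x : List α →₀ ℝ}
    (hx : x ∈ Finsupp.supported ℝ ℝ (words A)) :
    rev x ∈ Finsupp.supported ℝ ℝ (words A) := by
  refine supported_induction (p := fun x => rev x ∈ Finsupp.supported ℝ ℝ (words A))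
    (by simp) (fun f g hf hg => by simpa only [map_add] using add_mem hf hg)
    (fun l hl r => ?_) hx
  rw [rev_single]
  exact Finsupp.single_mem_supported _ _
    ⟨List.nodup_reverse.2 hl.1, by rw [List.toFinset_reverse, hl.2]⟩

theorem ins_mem {a : α} {A : Finset α} (ha : a ∈ A) {x : List α →₀ ℝ}
    (hx : x ∈ Finsupp.supported ℝ ℝ (words (A.erase a))) :
    ins a x ∈ Finsupp.supported ℝ ℝ (words A) := by
  refine supported_induction (p := fun x => ins a x ∈ Finsupp.supported ℝ ℝ (words A))
    (by simp) (fun f g hf hg => by simpa only [map_add] using add_mem hf hg)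
    (fun l hl r => ?_) hx
  rw [ins_single]
  have hal : a ∉ l := by
    rw [← List.mem_toFinset, hl.2]; simp
  refine Submodule.smul_mem _ _ (add_mem ?_ ?_) <;>
    refine Finsupp.single_mem_supported _ _ ⟨?_, ?_⟩
  · exact List.nodup_cons.2 ⟨hal, hl.1⟩
  · rw [List.toFinset_cons, hl.2, Finset.insert_erase ha]
  · exact (List.perm_append_singleton a l).nodup_iff.2 (List.nodup_cons.2 ⟨hal, hl.1⟩)
  · rw [List.toFinset_eq_of_perm _ _ (List.perm_append_singleton a l), List.toFinset_cons,
      hl.2, Finset.insert_erase ha]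

theorem words_eq (A : Finset α) : words A = (A.toList.permutations.toFinset : Set (List α)) := by
  ext l
  simp only [words, Set.mem_ofPred_eq, List.coe_toFinset, List.mem_permutations]
  constructor
  · rintro ⟨h1, h2⟩
    exact List.perm_of_nodup_nodup_toFinset_eq h1 A.nodup_toList (by simpa using h2)
  · intro h
    exact ⟨h.nodup_iff.2 A.nodup_toList, by simpa using List.toFinset_eq_of_perm _ _ h⟩

instance finite_words (A : Finset α) : Finite (words A) := by
  rw [words_eq]; infer_instance

theorem card_words (A : Finset α) : Nat.card (words A) = A.card.factorial := by
  rw [words_eq, Nat.card_coe_set_eq, Set.ncard_coe_finset,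
    List.toFinset_card_of_nodup (List.nodup_permutations _ A.nodup_toList),
    List.length_permutations, Finset.length_toList]

instance finite_supported (A : Finset α) :
    Module.Finite ℝ (Finsupp.supported ℝ ℝ (words A)) :=
  Module.Finite.equiv (Finsupp.supportedEquivFinsupp (M := ℝ) (R := ℝ) (words A)).symm

theorem finrank_supported (A : Finset α) :
    Module.finrank ℝ (Finsupp.supported ℝ ℝ (words A)) = A.card.factorial := by
  have := Fintype.ofFinite (words A)
  rw [(Finsupp.supportedEquivFinsupp (M := ℝ) (R := ℝ) (words A)).finrank_eq,
    Module.finrank_finsupp_self, ← card_words, Nat.card_eq_fintype_card]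

/-! ### The recursion for the joint kernels of deletions -/

/-- The elements of `ℝ⟨A, |A|⟩` that are killed by deletion of each letter of `S` and on which
reversal acts as the sign `ε`. -/
noncomputable def eig (ε : ℤˣ) (S A : Finset α) : Submodule ℝ (List α →₀ ℝ) :=
  Finsupp.supported ℝ ℝ (words A) ⊓ LinearMap.ker (rev - ((ε : ℤ) : ℝ) • LinearMap.id) ⊓
    ⨅ b ∈ S, LinearMap.ker (del b)

theorem mem_eig {ε : ℤˣ} {S A : Finset α} {x : List α →₀ ℝ} :
    x ∈ eig ε S A ↔ x ∈ Finsupp.supported ℝ ℝ (words A) ∧ rev x = ((ε : ℤ) : ℝ) • x ∧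
      ∀ b ∈ S, del b x = 0 := by
  simp [eig, sub_eq_zero, and_assoc]

instance finite_eig (ε : ℤˣ) (S A : Finset α) : Module.Finite ℝ (eig ε S A) :=
  Submodule.finiteDimensional_of_le (S₂ := Finsupp.supported ℝ ℝ (words A))
    fun _ hx => (mem_eig.1 hx).1

/-- Deletion of `a` maps `eig ε S A` onto `eig ε S (A \ a)`, with `ins a` as a section, and its
kernel is `eig ε (S ∪ a) A`. -/
theorem finrank_eig_insert (ε : ℤˣ) {S A : Finset α} {a : α} (ha : a ∈ A) (haS : a ∉ S) :
    Module.finrank ℝ (eig ε S A) =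
      Module.finrank ℝ (eig ε (insert a S) A) + Module.finrank ℝ (eig ε S (A.erase a)) := by
  have hmaps : ∀ x ∈ eig ε S A, del a x ∈ eig ε S (A.erase a) := fun x hx => by
    rw [mem_eig] at hx ⊢
    refine ⟨del_mem hx.1, by rw [← del_rev, hx.2.1, map_smul], fun b hb => ?_⟩
    rw [del_comm, hx.2.2 b hb, map_zero]
  have hsurj : Function.Surjective ((del a).restrict hmaps) := by
    rintro ⟨y, hy⟩
    have hy' := mem_eig.1 hy
    refine ⟨⟨ins a y, mem_eig.2 ⟨ins_mem ha hy'.1, by rw [← ins_rev, hy'.2.1, map_smul],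
      fun b hb => ?_⟩⟩, Subtype.ext (del_ins_self (by simp) hy'.1)⟩
    rw [del_ins_of_ne (ne_of_mem_of_not_mem hb haS).symm, hy'.2.2 b hb, map_zero]
  have hker : Module.finrank ℝ (LinearMap.ker ((del a).restrict hmaps)) =
      Module.finrank ℝ (eig ε (insert a S) A) := by
    rw [← LinearMap.finrank_range_of_inj
      (f := (eig ε S A).subtype ∘ₗ (LinearMap.ker ((del a).restrict hmaps)).subtype)
      (Subtype.val_injective.comp Subtype.val_injective)]
    refine congrArg (fun W : Submodule ℝ (List α →₀ ℝ) => Module.finrank ℝ W) ?_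
    ext x
    simp only [LinearMap.mem_range, Subtype.exists, LinearMap.coe_comp, Function.comp_apply,
      Submodule.subtype_apply, exists_prop, LinearMap.mem_ker, mem_eig, Finset.forall_mem_insert,
      Subtype.ext_iff, LinearMap.restrict_apply]
    constructor
    · rintro ⟨y, ⟨h1, h2, h3⟩, h4, rfl⟩
      exact ⟨h1, h2, h4, h3⟩
    · rintro ⟨h1, h2, h4, h3⟩
      exact ⟨x, ⟨h1, h2, h3⟩, h4, rfl⟩
  have hrank := LinearMap.finrank_range_add_finrank_ker (K := ℝ) (V := eig ε S A)
    (V₂ := eig ε S (A.erase a)) ((del a).restrict hmaps)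
  rw [LinearMap.range_eq_top.2 hsurj, finrank_top, hker] at hrank
  rw [← hrank, add_comm]

/-! ### Eigenspaces of reversal on all of `ℝ⟨A, |A|⟩` -/

theorem finrank_eig_add (A : Finset α) :
    Module.finrank ℝ (eig 1 ∅ A) + Module.finrank ℝ (eig (-1) ∅ A) = A.card.factorial := by
  rw [← Submodule.finrank_sup_add_finrank_inf_eq, ← finrank_supported]
  have hinf : eig 1 ∅ A ⊓ eig (-1) ∅ A = ⊥ := by
    rw [eq_bot_iff]
    rintro x ⟨h1, h2⟩
    have h1 := (mem_eig.1 h1).2.1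
    have h2 := (mem_eig.1 h2).2.1
    ext l
    have e1 := DFunLike.congr_fun h1 l
    have e2 := DFunLike.congr_fun h2 l
    simp at e1 e2
    simp; linarith
  have hsup : eig 1 ∅ A ⊔ eig (-1) ∅ A = Finsupp.supported ℝ ℝ (words A) := by
    apply le_antisymm
    · exact sup_le (fun x hx => (mem_eig.1 hx).1) (fun x hx => (mem_eig.1 hx).1)
    · intro x hx
      rw [Submodule.mem_sup]
      refine ⟨(2⁻¹ : ℝ) • (x + rev x), mem_eig.2 ⟨?_, ?_, by simp⟩,
        (2⁻¹ : ℝ) • (x - rev x), mem_eig.2 ⟨?_, ?_, by simp⟩, ?_⟩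
      · exact Submodule.smul_mem _ _ (add_mem hx (rev_mem hx))
      · simp only [map_smul, map_add, rev_rev, Units.val_one, Int.cast_one, one_smul, add_comm]
      · exact Submodule.smul_mem _ _ (sub_mem hx (rev_mem hx))
      · simp only [map_smul, map_sub, rev_rev, Units.val_neg, Units.val_one, Int.cast_neg,
          Int.cast_one, neg_smul, one_smul, ← smul_neg, neg_sub]
      · module
  rw [hinf, hsup, finrank_bot, add_zero]

/-- The function recording by a sign whether `a` precedes `b` in a word. -/
def orderSign (a b : α) (l : List α) : ℝ :=
  if l.filter (fun c => c = a ∨ c = b) = [a, b] then 1 else -1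

theorem orderSign_ne_zero (a b : α) (l : List α) : orderSign a b l ≠ 0 := by
  unfold orderSign; split_ifs <;> norm_num

theorem orderSign_reverse {A : Finset α} {a b : α} (ha : a ∈ A) (hb : b ∈ A) (hab : a ≠ b)
    {l : List α} (hl : l ∈ words A) : orderSign a b l.reverse = - orderSign a b l := by
  have hp : l.filter (fun c => c = a ∨ c = b) = [a, b] ∨
      l.filter (fun c => c = a ∨ c = b) = [b, a] := by
    rw [← List.perm_pair]
    refine List.perm_of_nodup_nodup_toFinset_eq (hl.1.filter _) (by simp [hab]) ?_
    have ha' : a ∈ l := by rw [← List.mem_toFinset, hl.2]; exact ha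
    have hb' : b ∈ l := by rw [← List.mem_toFinset, hl.2]; exact hb
    ext c
    simp only [List.mem_toFinset, List.mem_filter, decide_eq_true_eq, List.mem_cons,
      List.not_mem_nil, or_false]
    constructor
    · exact fun h => h.2
    · rintro (rfl | rfl)
      · exact ⟨ha', Or.inl rfl⟩
      · exact ⟨hb', Or.inr rfl⟩
  unfold orderSign
  rw [List.filter_reverse]
  rcases hp with h | h <;> rw [h] <;> simp [hab, hab.symm]

/-- Multiplication by `orderSign a b` exchanges the two eigenspaces of reversal. -/
theorem finrank_eig_le_neg {A : Finset α} {a b : α} (ha : a ∈ A) (hb : b ∈ A) (hab : a ≠ b)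
    (ε : ℤˣ) : Module.finrank ℝ (eig ε ∅ A) ≤ Module.finrank ℝ (eig (-ε) ∅ A) := by
  let T : (List α →₀ ℝ) →ₗ[ℝ] (List α →₀ ℝ) :=
    Finsupp.lsum ℝ (fun l => orderSign a b l • Finsupp.lsingle l)
  have hT : ∀ x l, T x l = orderSign a b l * x l := by
    intro x l
    induction x using Finsupp.induction_linear with
    | zero => simp
    | add f g hf hg => simp only [map_add, Finsupp.add_apply, hf, hg, mul_add]
    | single m r =>
      simp only [T, Finsupp.lsum_single, LinearMap.smul_apply, Finsupp.lsingle_apply,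
        Finsupp.smul_apply, smul_eq_mul]
      by_cases h : m = l
      · rw [h]
      · simp [h]
  have hmaps : ∀ x ∈ eig ε ∅ A, T x ∈ eig (-ε) ∅ A := by
    intro x hx
    have hx := mem_eig.1 hx
    have h0 := (Finsupp.mem_supported' ℝ x).1 hx.1
    refine mem_eig.2 ⟨(Finsupp.mem_supported' ℝ _).2 fun l hl => by rw [hT, h0 l hl, mul_zero],
      ?_, by simp⟩
    ext l
    have e := DFunLike.congr_fun hx.2.1 l
    rw [rev_apply] at e ⊢
    simp only [Finsupp.smul_apply, smul_eq_mul, hT, e, Units.val_neg, Int.cast_neg]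
    by_cases hl : l ∈ words A
    · rw [orderSign_reverse ha hb hab hl]; ring
    · rw [h0 l hl]; ring
  refine LinearMap.finrank_le_finrank_of_injective (f := T.restrict hmaps) ?_
  rintro ⟨x, hx⟩ ⟨y, hy⟩ h
  ext l
  have e := DFunLike.congr_fun (congrArg Subtype.val h) l
  exact mul_left_cancel₀ (orderSign_ne_zero a b l) (by simpa [LinearMap.restrict_apply, hT] using e)

theorem eig_neg_one_of_card_le_one {A : Finset α} (hA : A.card ≤ 1) : eig (-1) ∅ A = ⊥ := by
  rw [eq_bot_iff]
  intro x hx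
  have hx := mem_eig.1 hx
  ext l
  by_cases hl : l ∈ words A
  · have hlen : l.length ≤ 1 := by
      rw [← List.toFinset_card_of_nodup hl.1, hl.2]; exact hA
    have hrev : l.reverse = l := by
      match l, hlen with
      | [], _ => rfl
      | [c], _ => rfl
    have e := DFunLike.congr_fun hx.2.1 l
    rw [rev_apply, hrev] at e
    simp at e ⊢
    linarith
  · exact (Finsupp.mem_supported' ℝ x).1 hx.1 l hl

/-! ### Permutations supported on `A` without fixed points in `S` -/

section Perms

variable [Fintype α]

/-- The permutations of sign `ε` that fix every point outside `A` and no point of `S`. -/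
def perms (ε : ℤˣ) (S A : Finset α) : Finset (Equiv.Perm α) :=
  Finset.univ.filter fun σ =>
    (∀ x, x ∉ A → σ x = x) ∧ (∀ x ∈ S, σ x ≠ x) ∧ Equiv.Perm.sign σ = ε

theorem mem_perms {ε : ℤˣ} {S A : Finset α} {σ : Equiv.Perm α} : σ ∈ perms ε S A ↔
    (∀ x, x ∉ A → σ x = x) ∧ (∀ x ∈ S, σ x ≠ x) ∧ Equiv.Perm.sign σ = ε := by
  simp [perms]

/-- Among the permutations counted by `perms ε S A`, those moving `a` are counted by
`perms ε (S ∪ a) A` and those fixing `a` by `perms ε S (A \ a)`. -/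
theorem card_perms_insert (ε : ℤˣ) (S A : Finset α) (a : α) :
    (perms ε S A).card = (perms ε (insert a S) A).card + (perms ε S (A.erase a)).card := by
  rw [← Finset.card_filter_add_card_filter_not (s := perms ε S A) (fun σ => σ a ≠ a)]
  congr 2
  · ext σ
    simp only [Finset.mem_filter, mem_perms, Finset.forall_mem_insert]
    tauto
  · ext σ
    simp only [Finset.mem_filter, mem_perms, Finset.mem_erase, not_not]
    constructor
    · rintro ⟨⟨h1, h2, h3⟩, h4⟩
      refine ⟨fun x hx => ?_, h2, h3⟩
      by_cases hxa : x = a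
      · rw [hxa, h4]
      · exact h1 x fun h => hx ⟨hxa, h⟩
    · rintro ⟨h1, h2, h3⟩
      exact ⟨⟨fun x hx => h1 x fun h => hx h.2, h2, h3⟩, h1 a fun h => h.1 rfl⟩

theorem card_perms_add (A : Finset α) :
    (perms 1 ∅ A).card + (perms (-1) ∅ A).card = A.card.factorial := by
  have h := Fintype.card_congr (Equiv.Perm.subtypeEquivSubtypePerm (fun x => x ∈ A))
  rw [Fintype.card_perm, Fintype.card_coe, Fintype.card_subtype] at h
  rw [h, ← Finset.card_union_of_disjoint]
  · congr 1
    ext σ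
    simp only [Finset.mem_union, mem_perms, Finset.mem_filter, Finset.mem_univ, true_and]
    have := Int.units_eq_one_or (Equiv.Perm.sign σ)
    simp
    tauto
  · rw [Finset.disjoint_left]
    intro σ h1 h2
    have := (mem_perms.1 h1).2.2.symm.trans (mem_perms.1 h2).2.2
    exact absurd this (by decide)

/-- Multiplication by the transposition of `a` and `b` exchanges the two signs. -/
theorem card_perms_le_neg {A : Finset α} {a b : α} (ha : a ∈ A) (hb : b ∈ A) (hab : a ≠ b)
    (ε : ℤˣ) : (perms ε ∅ A).card ≤ (perms (-ε) ∅ A).card := by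
  refine Finset.card_le_card_of_injOn (fun σ => Equiv.swap a b * σ) (fun σ hσ => ?_)
    (fun σ _ τ _ h => mul_left_cancel h)
  have hσ := mem_perms.1 hσ
  refine mem_perms.2 ⟨fun x hx => ?_, by simp, by simp [Equiv.Perm.sign_swap hab, hσ.2.2]⟩
  rw [Equiv.Perm.mul_apply, hσ.1 x hx, Equiv.swap_apply_of_ne_of_ne]
  · exact (ne_of_mem_of_not_mem ha hx).symm
  · exact (ne_of_mem_of_not_mem hb hx).symm

theorem perms_neg_one_of_card_le_one {A : Finset α} (hA : A.card ≤ 1) :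
    perms (-1) ∅ A = ∅ := by
  rw [Finset.eq_empty_iff_forall_notMem]
  intro σ hσ
  obtain ⟨h1, -, h3⟩ := mem_perms.1 hσ
  have : σ = 1 := by
    ext x
    by_contra hne
    have hne : σ x ≠ x := hne
    have hx : x ∈ A := by
      by_contra h; exact hne (h1 x h)
    have hσx : σ x ∈ A := by
      by_contra h; exact hne (σ.injective (h1 _ h))
    exact hne (Finset.card_le_one.1 hA _ hσx _ hx)
  rw [this, Equiv.Perm.sign_one] at h3
  exact absurd h3 (by decide)

/-- If `A` has at least two elements, both signs account for exactly half of `|A|!` on either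
side; otherwise only the sign `+1` occurs. -/
theorem finrank_eig_empty (ε : ℤˣ) (A : Finset α) :
    Module.finrank ℝ (eig ε ∅ A) = (perms ε ∅ A).card := by
  have h1 := finrank_eig_add A
  have h2 := card_perms_add A
  rcases le_or_gt A.card 1 with hA | hA
  · have h3 : Module.finrank ℝ (eig (-1) ∅ A) = 0 := by
      rw [eig_neg_one_of_card_le_one hA, finrank_bot]
    have h4 : (perms (-1) ∅ A).card = 0 := by
      rw [perms_neg_one_of_card_le_one hA, Finset.card_empty]
    rcases Int.units_eq_one_or ε with rfl | rfl <;> omega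
  · obtain ⟨a, ha, b, hb, hab⟩ := Finset.one_lt_card.1 hA
    have h3 := finrank_eig_le_neg ha hb hab 1
    have h4 := finrank_eig_le_neg ha hb hab (-1)
    have h5 := card_perms_le_neg ha hb hab 1
    have h6 := card_perms_le_neg ha hb hab (-1)
    rw [neg_neg] at h4 h6
    rcases Int.units_eq_one_or ε with rfl | rfl <;> omega

/-- Both sides satisfy the recursion `f (S ∪ a) A = f S A - f S (A \ a)`. -/
theorem finrank_eig (ε : ℤˣ) (S A : Finset α) (hSA : S ⊆ A) :
    Module.finrank ℝ (eig ε S A) = (perms ε S A).card := by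
  induction S using Finset.induction_on generalizing A with
  | empty => exact finrank_eig_empty ε A
  | insert a S haS ih =>
    rw [Finset.insert_subset_iff] at hSA
    have h1 := finrank_eig_insert ε hSA.1 haS
    have h2 := card_perms_insert ε S A a
    have h3 := ih A hSA.2
    have h4 := ih (A.erase a) (Finset.subset_erase.2 ⟨hSA.2, haS⟩)
    omega

end Perms

/-! ### Comparison of injective words with lists -/

/-- The embedding of `ℝ⟨α, k⟩` into the free vector space on all lists. -/
noncomputable def toLists (α : Type*) [Fintype α] (k : ℕ) :
    (InjWord α k → ℝ) →ₗ[ℝ] (List α →₀ ℝ) :=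
  Finsupp.lmapDomain ℝ ℝ (fun w : InjWord α k => List.ofFn w.1) ∘ₗ
    (Finsupp.linearEquivFunOnFinite ℝ ℝ (InjWord α k)).symm.toLinearMap

theorem ofFn_val_injective {α : Type*} (k : ℕ) :
    Function.Injective (fun w : InjWord α k => List.ofFn w.1) :=
  fun _ _ h => Subtype.ext (List.ofFn_injective h)

/-- As `w` is injective, removing its `i`-th letter is the same as removing all letters equal
to `w i`. -/
theorem ofFn_comp_succAbove {m : ℕ} (w : InjWord α (m + 1)) (i : Fin (m + 1)) :
    List.ofFn (w.1 ∘ i.succAbove) = (List.ofFn w.1).filter (fun b => b ≠ w.1 i) := by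
  rw [List.ofFn_eq_map, List.ofFn_eq_map, List.filter_map, ← List.map_map]
  congr 1
  have : ((fun b => decide (b ≠ w.1 i)) ∘ w.1) = fun j => decide (j ≠ i) := by
    funext j; simp [w.2.eq_iff]
  rw [this]
  refine List.SortedLT.eq_of_mem_iff ?_ ?_ fun j => ?_
  · refine List.Pairwise.sortedLT ((List.sortedLT_finRange m).pairwise.map _ fun a b h => ?_)
    exact Fin.strictMono_succAbove i h
  · exact ((List.sortedLT_finRange (m + 1)).pairwise.filter _).sortedLT
  · simp [Fin.exists_succAbove_eq_iff]

theorem toLists_injective {α : Type*} [Fintype α] (k : ℕ) : Function.Injective (toLists α k) := by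
  unfold toLists
  rw [LinearMap.coe_comp]
  exact (Finsupp.mapDomain_injective (ofFn_val_injective k)).comp (LinearEquiv.injective _)

section Bridge

variable [Fintype α]

theorem toLists_single (k : ℕ) (w : InjWord α k) (r : ℝ) :
    toLists α k (Pi.single w r) = Finsupp.single (List.ofFn w.1) r := by
  simp [toLists]

/-- Reversal of injective words corresponds to reversal of lists. -/
theorem toLists_revMap (k : ℕ) (x : InjWord α k → ℝ) :
    toLists α k (revMap α k x) = rev (toLists α k x) := by
  have hrr : ∀ w : InjWord α k, revWord (revWord w) = w := fun w => by
    ext t; simp [revWord]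
  suffices h : toLists α k ∘ₗ revMap α k = rev ∘ₗ toLists α k from LinearMap.congr_fun h x
  refine LinearMap.pi_ext' fun w => LinearMap.ext_ring ?_
  simp only [LinearMap.comp_apply, LinearMap.single_apply]
  have : revMap α k (Pi.single w 1) = Pi.single (revWord w) 1 := by
    ext v
    simp only [revMap, LinearMap.funLeft_apply, Pi.single_apply]
    congr 1
    exact propext ⟨fun h => by rw [← h, hrr], fun h => by rw [h, hrr]⟩
  rw [this, toLists_single, toLists_single, rev_single]
  congr 1
  refine List.ext_getElem (by simp) fun i h1 h2 => ?_
  simp only [revWord, List.getElem_ofFn, List.getElem_reverse, List.length_ofFn]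
  exact congrArg w.1 (Fin.ext (by simp [Fin.val_rev]; omega))

/-- The subsets of `Fin (m + 1)` of size `m` are the complements of single positions, so `δ`
sends a word to the sum over `i` of the word with its `i`-th letter removed. -/
theorem toLists_delta_single {m : ℕ} (w : InjWord α (m + 1)) :
    toLists α m (delta α (m + 1) m (Pi.single w 1)) =
      ∑ i : Fin (m + 1), Finsupp.single (List.ofFn (w.1 ∘ i.succAbove)) 1 := by
  have h1 : delta α (m + 1) m (Pi.single w 1) =
      ∑ s ∈ (Finset.powersetCard m (Finset.univ : Finset (Fin (m + 1)))).attach,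
        Pi.single (subword w s.1 (Finset.mem_powersetCard.mp s.2).2) (1 : ℝ) := by
    ext u
    rw [delta, Matrix.mulVecLin_apply, Matrix.mulVec_single_one, Finset.sum_apply]
    simp only [Matrix.col_apply, Matrix.of_apply, Pi.single_apply, Finset.sum_boole, eq_comm]
  rw [h1, map_sum]
  simp only [toLists_single]
  symm
  refine Finset.sum_bij (fun i _ => ⟨{i}ᶜ, by simp [Finset.mem_powersetCard, Finset.card_compl]⟩)
    (by simp) (fun i _ j _ h => by simpa using h) ?_ ?_
  · rintro ⟨s, hs⟩ -
    have hs' := (Finset.mem_powersetCard.1 hs).2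
    have hc : sᶜ.card = 1 := by rw [Finset.card_compl, hs', Fintype.card_fin]; omega
    obtain ⟨i, hi⟩ := Finset.card_eq_one.1 hc
    exact ⟨i, Finset.mem_univ _, Subtype.ext ((congrArg compl hi.symm).trans (compl_compl s))⟩
  · intro i _
    congr 2
    funext t
    simp only [subword, Function.comp_apply, Finset.coe_orderIsoOfFin_apply,
      Finset.orderEmbOfFin_compl_singleton_apply]
    rfl

end Bridge

/-- On words using every letter, `δ` is the sum of the deletions of the individual letters. -/
theorem toLists_delta {m : ℕ} (x : InjWord (Fin (m + 1)) (m + 1) → ℝ) :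
    toLists (Fin (m + 1)) m (delta (Fin (m + 1)) (m + 1) m x) =
      ∑ a, del a (toLists (Fin (m + 1)) (m + 1) x) := by
  suffices h : toLists (Fin (m + 1)) m ∘ₗ delta (Fin (m + 1)) (m + 1) m =
      ∑ a, del a ∘ₗ toLists (Fin (m + 1)) (m + 1) by
    simpa using LinearMap.congr_fun h x
  refine LinearMap.pi_ext' fun w => LinearMap.ext_ring ?_
  simp only [LinearMap.comp_apply, LinearMap.single_apply, LinearMap.sum_apply]
  rw [toLists_delta_single, toLists_single]
  simp only [del_single, ofFn_comp_succAbove]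
  exact Function.Bijective.sum_comp (Finite.injective_iff_bijective.1 w.2)
    (fun a => Finsupp.single ((List.ofFn w.1).filter (fun b => b ≠ a)) (1 : ℝ))

theorem range_toLists (n : ℕ) : LinearMap.range (toLists (Fin n) n) =
    Finsupp.supported ℝ ℝ (words (Finset.univ : Finset (Fin n))) := by
  have hr : Set.range (fun w : InjWord (Fin n) n => List.ofFn w.1) =
      words (Finset.univ : Finset (Fin n)) := by
    ext l
    constructor
    · rintro ⟨w, rfl⟩
      refine ⟨List.nodup_ofFn.2 w.2, ?_⟩
      ext a
      simpa using Finite.injective_iff_surjective.1 w.2 a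
    · rintro ⟨h1, h2⟩
      have hlen : l.length = n := by
        rw [← List.toFinset_card_of_nodup h1, h2, Finset.card_univ, Fintype.card_fin]
      refine ⟨⟨fun i => l.get (i.cast hlen.symm), fun i j h => ?_⟩,
        List.ext_getElem (by simp [hlen]) fun i _ _ => by simp⟩
      exact Fin.cast_injective hlen.symm (List.nodup_iff_injective_get.1 h1 h)
  rw [toLists, LinearMap.range_comp, LinearEquiv.range, ← Finsupp.supported_univ,
    Finsupp.lmapDomain_supported, Set.image_univ, hr]

/-- The summands `D_a y` have disjoint supports, since `D_a y` only involves words in the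
letters other than `a`. -/
theorem sum_del_eq_zero_iff [Fintype α] {y : List α →₀ ℝ}
    (hy : y ∈ Finsupp.supported ℝ ℝ (words (Finset.univ : Finset α))) :
    ∑ a, del a y = 0 ↔ ∀ a, del a y = 0 := by
  refine ⟨fun h a => ?_, fun h => Finset.sum_eq_zero fun a _ => h a⟩
  ext l
  have hout : ∀ b, l ∉ words (Finset.univ.erase b) → del b y l = 0 :=
    fun b => (Finsupp.mem_supported' ℝ _).1 (del_mem hy) l
  by_cases hl : l ∈ words (Finset.univ.erase a)
  · have hs := DFunLike.congr_fun h l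
    rw [Finsupp.finsetSum_apply, Finset.sum_eq_single a] at hs
    · exact hs
    · intro b _ hba
      refine hout b fun hlb => hba ?_
      have := hl.2.symm.trans hlb.2
      by_contra hne
      have hb : b ∈ (Finset.univ : Finset α).erase a := by simpa using hne
      rw [this] at hb
      simp at hb
    · simp
  · exact hout a hl

theorem mem_ker_delta_iff {m : ℕ} (x : InjWord (Fin (m + 1)) (m + 1) → ℝ) :
    x ∈ LinearMap.ker (delta (Fin (m + 1)) (m + 1) m) ↔
      ∀ a, del a (toLists (Fin (m + 1)) (m + 1) x) = 0 := by
  rw [LinearMap.mem_ker, ← (toLists_injective m).eq_iff, map_zero, toLists_delta,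
    sum_del_eq_zero_iff]
  rw [← range_toLists]
  exact LinearMap.mem_range_self _ x

/-- The embedding into lists identifies `ker δ ⊓ W`, where `W` is the `ε`-eigenspace of reversal,
with `eig ε univ univ`. -/
theorem finrank_ker_inf {m : ℕ} (ε : ℤˣ)
    (W : Submodule ℝ (InjWord (Fin (m + 1)) (m + 1) → ℝ))
    (hW : ∀ x, x ∈ W ↔ revMap (Fin (m + 1)) (m + 1) x = ((ε : ℤ) : ℝ) • x) :
    Module.finrank ℝ ↥(LinearMap.ker (delta (Fin (m + 1)) (m + 1) m) ⊓ W) =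
      (Finset.univ.filter (fun w : Equiv.Perm (Fin (m + 1)) =>
        (∀ i, w i ≠ i) ∧ Equiv.Perm.sign w = ε)).card := by
  have hmap : (LinearMap.ker (delta (Fin (m + 1)) (m + 1) m) ⊓ W).map
      (toLists (Fin (m + 1)) (m + 1)) = eig ε Finset.univ Finset.univ := by
    ext y
    rw [mem_eig, ← range_toLists, Submodule.mem_map]
    simp only [Submodule.mem_inf, mem_ker_delta_iff, hW, Finset.mem_univ, forall_true_left]
    have key : ∀ x, rev (toLists (Fin (m + 1)) (m + 1) x) =
        ((ε : ℤ) : ℝ) • toLists (Fin (m + 1)) (m + 1) x ↔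
        revMap (Fin (m + 1)) (m + 1) x = ((ε : ℤ) : ℝ) • x := fun x => by
      rw [← toLists_revMap, ← map_smul, (toLists_injective (m + 1)).eq_iff]
    constructor
    · rintro ⟨x, ⟨h1, h2⟩, rfl⟩
      exact ⟨LinearMap.mem_range_self _ x, (key x).2 h2, h1⟩
    · rintro ⟨⟨x, rfl⟩, h2, h1⟩
      exact ⟨x, ⟨h1, (key x).1 h2⟩, rfl⟩
  rw [(Submodule.equivMapOfInjective _ (toLists_injective (m + 1)) _).finrank_eq, hmap,
    finrank_eig ε _ _ subset_rfl]
  congr 1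
  ext σ
  simp [mem_perms]

end WordReversal

/-- The reversal involution preserves the kernel of `δ({1,…,n}, n, n−1)`, and within that
kernel its `(+1)`-eigenspace has dimension the number of even derangements of `S_n`, while
its `(−1)`-eigenspace has dimension the number of odd derangements of `S_n`. -/
theorem reversal_on_ker_delta (n : ℕ) (hn : 1 ≤ n) :
    (∀ x ∈ LinearMap.ker (delta (Fin n) n (n - 1)),
      revMap (Fin n) n x ∈ LinearMap.ker (delta (Fin n) n (n - 1))) ∧
    Module.finrank ℝ ↥(LinearMap.ker (delta (Fin n) n (n - 1)) ⊓
        LinearMap.ker (revMap (Fin n) n - LinearMap.id)) =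
      (Finset.univ.filter (fun w : Equiv.Perm (Fin n) =>
        (∀ i, w i ≠ i) ∧ Equiv.Perm.sign w = 1)).card ∧
    Module.finrank ℝ ↥(LinearMap.ker (delta (Fin n) n (n - 1)) ⊓
        LinearMap.ker (revMap (Fin n) n + LinearMap.id)) =
      (Finset.univ.filter (fun w : Equiv.Perm (Fin n) =>
        (∀ i, w i ≠ i) ∧ Equiv.Perm.sign w = -1)).card := by
  obtain ⟨m, rfl⟩ : ∃ m, n = m + 1 := ⟨n - 1, by omega⟩
  rw [Nat.add_sub_cancel]
  refine ⟨fun x hx => ?_, ?_, ?_⟩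
  · rw [WordReversal.mem_ker_delta_iff] at hx ⊢
    intro a
    rw [WordReversal.toLists_revMap, WordReversal.del_rev, hx a, map_zero]
  · exact WordReversal.finrank_ker_inf 1 _ fun x => by simp [sub_eq_zero]
  · exact WordReversal.finrank_ker_inf (-1) _ fun x => by simp [add_eq_zero_iff_eq_neg]
end

section
/- Fix n ≥ 1 and 0 ≤ j ≤ n−1. Then ker δ({1,…,n}, n, n−j) ⊆ ker δ({1,…,n}, n, n−j−1), and the linear map δ({1,…,n}, n, n−j) maps ker δ({1,…,n}, n, n−j−1) onto the subspace ⊕_J ker δ({1,…,n}∖J, n−j, n−j−1) of ℝ⟨{1,…,n}, n−j⟩, where the direct sum is over all j-element subsets J ⊆ {1,…,n} and ℝ⟨{1,…,n}∖J, n−j⟩ is identified with the span of the injective words of length n−j all of whose letters avoid J. The kernel of this restricted map is ker δ({1,…,n}, n, n−j); consequently δ({1,…,n}, n, n−j) induces a linear isomorphism ker δ({1,…,n}, n, n−j−1) / ker δ({1,…,n}, n, n−j) ≅ ⊕_J ker δ({1,…,n}∖J, n−j, n−j−1). -/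
/-- For a `j`-element subset `J ⊆ {1,…,n}`, the copy of `ker δ({1,…,n}∖J, n−j, n−j−1)`
inside `ℝ⟨{1,…,n}, n−j⟩`: we identify `ℝ⟨{1,…,n}∖J, n−j⟩` with the span of the injective
words of length `n−j` all of whose letters avoid `J` (i.e. the elements supported on such
words), and intersect with the kernel of the ambient map `δ({1,…,n}, n−j, n−j−1)`. -/
noncomputable def avoidKer (n j : ℕ) (J : Finset (Fin n)) :
    Submodule ℝ (InjWord (Fin n) (n - j) → ℝ) where
  carrier := {x | (∀ w : InjWord (Fin n) (n - j), (∃ t, w.1 t ∈ J) → x w = 0) ∧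
    delta (Fin n) (n - j) (n - j - 1) x = 0}
  add_mem' := by
    rintro a b ⟨ha, ha'⟩ ⟨hb, hb'⟩
    exact ⟨fun w hw => by simp [Pi.add_apply, ha w hw, hb w hw], by simp [ha', hb']⟩
  zero_mem' := ⟨fun w _ => rfl, by simp⟩
  smul_mem' := by
    rintro c a ⟨ha, ha'⟩
    exact ⟨fun w hw => by simp [Pi.smul_apply, ha w hw], by simp [ha']⟩

/-! ### Injective words as duplicate-free lists -/

namespace InjWord

variable {A : Type*}

/-- The letters of an injective word, listed in order. -/
def toList {i : ℕ} (w : InjWord A i) : List A := List.ofFn w.1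

lemma nodup_toList {i : ℕ} (w : InjWord A i) : (toList w).Nodup := List.nodup_ofFn.2 w.2

lemma length_toList {i : ℕ} (w : InjWord A i) : (toList w).length = i := by simp [toList]

lemma mem_toList {i : ℕ} {w : InjWord A i} {a : A} : a ∈ toList w ↔ ∃ t, w.1 t = a := by
  simp [toList, List.mem_ofFn]

lemma toList_injective {i : ℕ} : Function.Injective (toList : InjWord A i → List A) :=
  fun _ _ h => Subtype.ext (List.ofFn_injective h)

/-- The injective words of length `i` are exactly the duplicate-free lists of length `i`. -/
lemma exists_toList_eq {i : ℕ} (l : List A) (hl : l.Nodup) (hi : l.length = i) :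
    ∃ w : InjWord A i, toList w = l := by
  subst hi
  exact ⟨⟨l.get, List.nodup_iff_injective_get.1 hl⟩, List.ofFn_get l⟩

lemma card_toFinset_toList [DecidableEq A] {i : ℕ} (w : InjWord A i) :
    (toList w).toFinset.card = i := by
  rw [List.toFinset_card_of_nodup (nodup_toList w), length_toList]

lemma sublist_iff_exists_orderEmb {i j : ℕ} (u : InjWord A i) (w : InjWord A j) :
    (toList u).Sublist (toList w) ↔ ∃ f : Fin i ↪o Fin j, ∀ t, w.1 (f t) = u.1 t := by
  rw [List.sublist_iff_exists_fin_orderEmbedding_get_eq]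
  have hu := length_toList u
  have hw := length_toList w
  constructor
  · rintro ⟨f, hf⟩
    refine ⟨((Fin.castOrderIso hu.symm).toOrderEmbedding.trans f).trans
      (Fin.castOrderIso hw).toOrderEmbedding, fun t => ?_⟩
    have := hf (Fin.cast hu.symm t)
    simp only [toList, List.get_ofFn] at this
    exact this.symm
  · rintro ⟨f, hf⟩
    refine ⟨((Fin.castOrderIso hu).toOrderEmbedding.trans f).trans
      (Fin.castOrderIso hw.symm).toOrderEmbedding, fun t => ?_⟩
    exact (List.get_ofFn u.1 t).trans
      ((hf (Fin.cast hu t)).symm.trans (List.get_ofFn w.1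
        (Fin.cast hw.symm (f (Fin.cast hu t)))).symm)

/-- A sublist of a duplicate-free list is determined by its set of entries. -/
lemma sublist_ext {w v v' : List A} (hw : w.Nodup) (hv : v.Sublist w) (hv' : v'.Sublist w)
    (h : ∀ a, a ∈ v ↔ a ∈ v') : v = v' := by
  classical
  have key : ∀ {w v : List A}, w.Nodup → v.Sublist w → v = w.filter (· ∈ v) := by
    intro w v hw hv
    have h1 : v.Sublist (w.filter (· ∈ v)) := by
      have := hv.filter (· ∈ v)
      rwa [List.filter_eq_self.2 (by simp)] at this
    refine h1.eq_of_length_le ?_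
    refine ((hw.filter _).subperm ?_).length_le
    intro a ha
    simpa using (List.mem_filter.1 ha).2
  rw [key hw hv, key hw hv']
  simp only [h]

/-! ### Coefficients of `δ` -/

lemma card_subword_eq [DecidableEq A] {i j : ℕ} (u : InjWord A i) (w : InjWord A j) :
    ((Finset.powersetCard i (Finset.univ : Finset (Fin j))).attach.filter
      (fun s => subword w s.1 (Finset.mem_powersetCard.mp s.2).2 = u)).card =
      if (toList u).Sublist (toList w) then 1 else 0 := by
  split_ifs with h
  · obtain ⟨f, hf⟩ := (sublist_iff_exists_orderEmb u w).1 h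
    rw [Finset.card_eq_one]
    refine ⟨⟨Finset.univ.map f.toEmbedding, by simp [Finset.mem_powersetCard]⟩, ?_⟩
    ext ⟨s, hs⟩
    have hc := (Finset.mem_powersetCard.mp hs).2
    simp only [Finset.mem_filter, Finset.mem_attach, true_and, Finset.mem_singleton,
      Subtype.mk.injEq]
    constructor
    · intro hsu
      have h1 : ∀ t, s.orderEmbOfFin hc t = f t := by
        intro t
        apply w.2
        rw [hf]
        exact congrFun (congrArg Subtype.val hsu) t
      rw [← Finset.map_orderEmbOfFin_univ s hc]
      congr 1
      ext t
      simp [h1]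
    · rintro rfl
      apply Subtype.ext
      funext t
      rw [← hf]
      have := Finset.orderEmbOfFin_unique' hc (f := f) (by simp)
      change w.1 ((Finset.univ.map f.toEmbedding).orderEmbOfFin hc t) = _
      rw [← this]
  · rw [Finset.card_eq_zero, Finset.filter_eq_empty_iff]
    rintro ⟨s, hs⟩ - hsu
    apply h
    rw [sublist_iff_exists_orderEmb]
    exact ⟨s.orderEmbOfFin (Finset.mem_powersetCard.mp hs).2,
      fun t => congrFun (congrArg Subtype.val hsu) t⟩

/-- The coefficient of `δ x` at `u` is the sum of the coefficients of `x` over all words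
containing `u` as a subword: a word with distinct letters contains `u` at most once. -/
lemma delta_apply [Fintype A] [DecidableEq A] (j i : ℕ) (x : InjWord A j → ℝ)
    (u : InjWord A i) :
    delta A j i x u = ∑ w, if (toList u).Sublist (toList w) then x w else 0 := by
  simp only [delta, Matrix.mulVecLin_apply, Matrix.mulVec, dotProduct, Matrix.of_apply,
    card_subword_eq]
  refine Finset.sum_congr rfl fun w _ => ?_
  split_ifs <;> simp

/-- If all words in the support of `x` contain the letter `a`, and `a` is not in `u`, then
every such word above `u` contains exactly one word `v` obtained by inserting `a` into `u`. -/
lemma delta_eq_sum_insert [Fintype A] [DecidableEq A] {N i : ℕ} (x : InjWord A N → ℝ) (a : A)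
    (hx : ∀ w, x w ≠ 0 → a ∈ toList w) (u : InjWord A i) (ha : a ∉ toList u) :
    delta A N i x u =
      ∑ v : InjWord A (i + 1), if a ∈ toList v ∧ (toList u).Sublist (toList v)
        then delta A N (i + 1) x v else 0 := by
  simp only [delta_apply]
  have : ∀ v : InjWord A (i + 1), (if a ∈ toList v ∧ (toList u).Sublist (toList v)
        then ∑ w, (if (toList v).Sublist (toList w) then x w else 0) else 0) =
      ∑ w, if (a ∈ toList v ∧ (toList u).Sublist (toList v)) ∧ (toList v).Sublist (toList w)
        then x w else 0 := by
    intro v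
    by_cases h : a ∈ toList v ∧ (toList u).Sublist (toList v) <;> simp [h]
  simp only [this]
  rw [Finset.sum_comm]
  refine Finset.sum_congr rfl fun w _ => ?_
  by_cases hw : x w = 0
  · simp [hw]
  have haw := hx w hw
  split_ifs with huw
  · set l := (toList w).filter (fun b => b = a ∨ b ∈ toList u) with hl
    have hlw : l.Sublist (toList w) := List.filter_sublist
    have hul : (toList u).Sublist l := by
      have := huw.filter (fun b => b = a ∨ b ∈ toList u)
      rwa [List.filter_eq_self.2 (by simp +contextual)] at this
    have hmem : ∀ b, b ∈ l ↔ b = a ∨ b ∈ toList u := by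
      intro b
      simp only [hl, List.mem_filter, decide_eq_true_eq]
      constructor
      · exact fun h => h.2
      · rintro (rfl | h)
        · exact ⟨haw, Or.inl rfl⟩
        · exact ⟨huw.subset h, Or.inr h⟩
    have hnd : l.Nodup := (nodup_toList w).filter _
    have hlen : l.length = i + 1 := by
      rw [← List.toFinset_card_of_nodup hnd]
      have : l.toFinset = insert a (toList u).toFinset := by
        ext b; simp [hmem]
      rw [this, Finset.card_insert_of_notMem (by simpa using ha), card_toFinset_toList]
    obtain ⟨v₀, hv₀⟩ := exists_toList_eq l hnd hlen
    rw [Finset.sum_eq_single v₀]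
    · rw [if_pos]
      rw [hv₀]
      exact ⟨⟨(hmem a).2 (Or.inl rfl), hul⟩, hlw⟩
    · intro v _ hne
      rw [if_neg]
      rintro ⟨⟨hav, huv⟩, hvw⟩
      apply hne
      apply toList_injective
      refine sublist_ext (nodup_toList w) hvw (hv₀ ▸ hlw) fun b => ?_
      have hsub : insert a (toList u).toFinset = (toList v).toFinset := by
        apply Finset.eq_of_subset_of_card_le
        · intro b hb
          rcases Finset.mem_insert.1 hb with rfl | hb
          · simpa using hav
          · exact List.mem_toFinset.2 (huv.subset (List.mem_toFinset.1 hb))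
        · rw [Finset.card_insert_of_notMem (by simpa using ha), card_toFinset_toList,
            card_toFinset_toList]
      have := congrArg (b ∈ ·) hsub
      simp only [Finset.mem_insert, List.mem_toFinset, eq_iff_iff] at this
      rw [hv₀, hmem, this]
    · simp
  · symm
    apply Finset.sum_eq_zero
    intro v _
    rw [if_neg]
    rintro ⟨⟨-, h1⟩, h2⟩
    exact huw (h1.trans h2)

/-- For `x` supported on the arrangements of a fixed set `S`, vanishing of `δ x` in degree
`k` forces vanishing in all smaller degrees. -/
lemma delta_eq_zero_of_le [Fintype A] [DecidableEq A] {N k : ℕ} (S : Finset A)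
    (x : InjWord A N → ℝ) (hx : ∀ w, x w ≠ 0 → (toList w).toFinset = S) (hk : k ≤ N)
    (h : delta A N k x = 0) {i : ℕ} (hi : i ≤ k) : delta A N i x = 0 := by
  induction hi using Nat.decreasingInduction with
  | self => exact h
  | of_succ i hi ih =>
    funext u
    by_cases hS : ∃ w, x w ≠ 0
    · obtain ⟨w, hw⟩ := hS
      have hcard : (toList u).toFinset.card < S.card := by
        rw [← hx w hw, card_toFinset_toList, card_toFinset_toList]; omega
      obtain ⟨a, haS, hau⟩ := Finset.exists_mem_notMem_of_card_lt_card hcard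
      rw [delta_eq_sum_insert x a ?_ u (by simpa using hau)]
      · simp [ih]
      · intro w hw
        rw [← List.mem_toFinset, hx w hw]; exact haS
    · push Not at hS
      rw [delta_apply]
      simp [hS]

/-! ### Components of the image -/

/-- The `J`-component of `x ∈ ℝ⟨A,m⟩`: the part of `x` supported on words avoiding `J`. -/
def avoidPart [DecidableEq A] {m : ℕ} (J : Finset A) (x : InjWord A m → ℝ) :
    InjWord A m → ℝ := fun w => if Disjoint (toList w).toFinset J then x w else 0

lemma toFinset_eq_univ [Fintype A] [DecidableEq A] {N : ℕ} (hN : Fintype.card A = N)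
    (w : InjWord A N) : (toList w).toFinset = Finset.univ := by
  rw [← Finset.card_eq_iff_eq_univ, card_toFinset_toList, hN]

lemma toFinset_eq_compl [Fintype A] [DecidableEq A] {m : ℕ} {J : Finset A}
    (hJ : J.card + m = Fintype.card A) {w : InjWord A m}
    (hw : Disjoint (toList w).toFinset J) : (toList w).toFinset = Jᶜ := by
  apply Finset.eq_of_subset_of_card_le
  · exact Finset.subset_compl_iff_disjoint_right.2 hw
  · rw [Finset.card_compl, card_toFinset_toList]; omega

/-- If `x` lies in the kernel of `δ(A,|A|,k)`, then each component of `δ(A,|A|,k+1) x` lies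
in the kernel of `δ(A,k+1,k)`: at a word `u` avoiding `J`, the unique missing letter `a`
outside `J` turns the coefficient into that of `δ(A,|A|,k) x` at `u`. -/
lemma delta_avoidPart [Fintype A] [DecidableEq A] {N k : ℕ} (hN : Fintype.card A = N)
    (J : Finset A) (hJ : J.card + (k + 1) = N) (x : InjWord A N → ℝ)
    (hx : delta A N k x = 0) :
    delta A (k + 1) k (avoidPart J (delta A N (k + 1) x)) = 0 := by
  funext u
  by_cases hu : Disjoint (toList u).toFinset J
  · have hcard : ((toList u).toFinset ∪ J).card = J.card + k := by
      rw [Finset.card_union_of_disjoint hu, card_toFinset_toList, add_comm]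
    obtain ⟨a, -, ha⟩ := Finset.exists_mem_notMem_of_card_lt_card
      (s := (toList u).toFinset ∪ J) (t := Finset.univ)
      (by rw [Finset.card_univ, hcard]; omega)
    simp only [Finset.mem_union, List.mem_toFinset, not_or] at ha
    have h0 := delta_eq_sum_insert x a
      (fun w _ => by rw [← List.mem_toFinset, toFinset_eq_univ hN]; simp) u ha.1
    rw [hx] at h0
    rw [h0, delta_apply]
    refine Finset.sum_congr rfl fun v _ => ?_
    by_cases huv : (toList u).Sublist (toList v)
    · have : Disjoint (toList v).toFinset J ↔ a ∈ toList v := by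
        constructor
        · intro hv
          rw [← List.mem_toFinset, toFinset_eq_compl (by omega) hv]
          simpa using ha.2
        · intro hav
          have : insert a (toList u).toFinset = (toList v).toFinset := by
            apply Finset.eq_of_subset_of_card_le
            · intro b hb
              rcases Finset.mem_insert.1 hb with rfl | hb
              · simpa using hav
              · exact List.mem_toFinset.2 (huv.subset (List.mem_toFinset.1 hb))
            · rw [Finset.card_insert_of_notMem (by simpa using ha.1), card_toFinset_toList,
                card_toFinset_toList]
          rw [← this, Finset.disjoint_insert_left]
          exact ⟨ha.2, hu⟩
      simp [huv, avoidPart, this]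
    · simp [huv]
  · rw [delta_apply]
    apply Finset.sum_eq_zero
    intro v _
    split_ifs with huv
    · rw [avoidPart, if_neg]
      intro hv
      refine hu (hv.mono_left fun b hb => ?_)
      exact List.mem_toFinset.2 (huv.subset (List.mem_toFinset.1 hb))
    · rfl

/-! ### Preimages by concatenation -/

/-- Right concatenation with the word `e`, extended linearly (terms `v ++ e` that are not
injective words of length `N` are discarded). -/
def appendRight [Fintype A] [DecidableEq A] {m : ℕ} (N : ℕ) (e : List A) (y : InjWord A m → ℝ) :
    InjWord A N → ℝ := fun w => ∑ v, if toList w = toList v ++ e then y v else 0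

lemma delta_appendRight [Fintype A] [DecidableEq A] {m N i : ℕ} (e : List A) (he : e.Nodup)
    (hN : m + e.length = N) (y : InjWord A m → ℝ)
    (hy : ∀ v, y v ≠ 0 → Disjoint (toList v).toFinset e.toFinset) (u : InjWord A i) :
    delta A N i (appendRight N e y) u =
      ∑ v, if (toList u).Sublist (toList v ++ e) then y v else 0 := by
  rw [delta_apply]
  have : ∀ w : InjWord A N,
      (if (toList u).Sublist (toList w) then appendRight N e y w else 0) =
      ∑ v, if (toList u).Sublist (toList w) ∧ toList w = toList v ++ e then y v else 0 := by
    intro w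
    by_cases h : (toList u).Sublist (toList w) <;> simp [h, appendRight]
  simp only [this]
  rw [Finset.sum_comm]
  refine Finset.sum_congr rfl fun v _ => ?_
  by_cases hv : y v = 0
  · simp [hv]
  have hd := hy v hv
  obtain ⟨w₀, hw₀⟩ := exists_toList_eq (i := N) (toList v ++ e)
    (List.nodup_append'.2 ⟨nodup_toList v, he, List.disjoint_toFinset_iff_disjoint.1 hd⟩)
    (by simp [length_toList, hN])
  rw [Finset.sum_eq_single w₀]
  · simp [hw₀]
  · intro w _ hne
    rw [if_neg]
    rintro ⟨-, h⟩
    exact hne (toList_injective (h.trans hw₀.symm))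
  · simp

/-- Let `y` be supported on the arrangements of a set disjoint from `e`, with `δ y = 0` one
degree below the top. Then `δ(y · e)`, in the form given by `delta_appendRight`, vanishes at each
word `u` with fewer than `m` letters outside `e`: its coefficient is either an empty sum or the
coefficient of `δ y` at the part of `u` outside `e`. -/
lemma sum_append_eq_zero [Fintype A] [DecidableEq A] {m i : ℕ} (e : List A)
    (S : Finset A) (hS : Disjoint S e.toFinset) (y : InjWord A m → ℝ)
    (hy : ∀ v, y v ≠ 0 → (toList v).toFinset = S) (hy0 : delta A m (m - 1) y = 0)
    (u : InjWord A i) (hu : ((toList u).filter (· ∉ e)).length < m) :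
    (∑ v, if (toList u).Sublist (toList v ++ e) then y v else 0) = 0 := by
  have hfil : ∀ p q : List A, (∀ a ∈ p, a ∉ e) → q.Sublist e → toList u = p ++ q →
      (toList u).filter (· ∉ e) = p := by
    intro p q hp hq h
    rw [h, List.filter_append, List.filter_eq_self.2 (by simpa using hp),
      List.filter_eq_nil_iff.2 (by simpa using fun a ha => hq.subset ha), List.append_nil]
  have hav : ∀ v, y v ≠ 0 → ∀ a ∈ toList v, a ∉ e := by
    intro v hv a ha hae
    have : a ∈ S := by rw [← hy v hv]; simpa using ha
    exact Finset.disjoint_left.1 hS this (by simpa using hae)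
  by_cases hP : ∃ p q : List A, (∀ a ∈ p, a ∉ e) ∧ q.Sublist e ∧ toList u = p ++ q
  · obtain ⟨p, q, hp, hq, hpq⟩ := hP
    have hpu := hfil p q hp hq hpq
    have hpnd : p.Nodup := hpu ▸ (nodup_toList u).filter _
    obtain ⟨p', hp'⟩ := exists_toList_eq p hpnd rfl
    have hz := delta_eq_zero_of_le S y hy (Nat.sub_le m 1) hy0
      (i := p.length) (by rw [hpu] at hu; omega)
    have hzp := congrFun hz p'
    rw [delta_apply, hp'] at hzp
    refine Eq.trans ?_ hzp
    refine Finset.sum_congr rfl fun v _ => ?_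
    by_cases hv : y v = 0
    · simp [hv]
    refine if_congr ?_ rfl rfl
    constructor
    · rw [List.sublist_append_iff]
      rintro ⟨p₁, q₁, h1, h2, h3⟩
      have := hfil p₁ q₁ (fun a ha => hav v hv a (h2.subset ha)) h3 h1
      rw [← hpu, this]
      exact h2
    · intro h
      rw [hpq]
      exact h.append hq
  · apply Finset.sum_eq_zero
    intro v _
    by_cases hv : y v = 0
    · simp [hv]
    rw [if_neg]
    rw [List.sublist_append_iff]
    rintro ⟨p₁, q₁, h1, h2, h3⟩
    exact hP ⟨p₁, q₁, fun a ha => hav v hv a (h2.subset ha), h3, h1⟩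

/-- Every `y` supported on the arrangements of `Jᶜ` with `δ(A,m,m-1) y = 0` is of the form
`δ(A,N,m) x` with `δ(A,N,m-1) x = 0`; a preimage is `y · e`, with `e` any arrangement of `J`. -/
lemma exists_preimage [Fintype A] [DecidableEq A] {m N : ℕ} (hN : Fintype.card A = N)
    (hm : 1 ≤ m) (J : Finset A) (hJ : J.card + m = N) (y : InjWord A m → ℝ)
    (hy : ∀ v, y v ≠ 0 → Disjoint (toList v).toFinset J) (hy0 : delta A m (m - 1) y = 0) :
    ∃ x : InjWord A N → ℝ, delta A N (m - 1) x = 0 ∧ delta A N m x = y := by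
  have heJ : J.toList.toFinset = J := Finset.toList_toFinset J
  have hyJ : ∀ v, y v ≠ 0 → (toList v).toFinset = Jᶜ :=
    fun v hv => toFinset_eq_compl (by omega) (hy v hv)
  have hS : Disjoint Jᶜ J.toList.toFinset := by rw [heJ]; exact disjoint_compl_left
  have hap {i : ℕ} := delta_appendRight (i := i) (N := N) J.toList J.nodup_toList
    (by rw [Finset.length_toList]; omega) y (by rwa [heJ])
  refine ⟨appendRight N J.toList y, ?_, ?_⟩
  · funext u
    rw [hap]
    refine sum_append_eq_zero _ Jᶜ hS y hyJ hy0 u ?_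
    have := List.length_filter_le (· ∉ J.toList) (toList u)
    rw [length_toList] at this
    omega
  · funext u
    rw [hap]
    by_cases hu : Disjoint (toList u).toFinset J
    · rw [Finset.sum_eq_single u]
      · rw [if_pos (List.sublist_append_left _ _)]
      · intro v _ hne
        by_cases hv : y v = 0
        · simp [hv]
        rw [if_neg]
        intro h
        rw [List.sublist_append_iff] at h
        obtain ⟨p, q, h1, h2, h3⟩ := h
        have hq : q = [] := by
          rw [List.eq_nil_iff_forall_not_mem]
          intro a ha
          have hau : a ∈ (toList u).toFinset := by simp [h1, ha]
          exact Finset.disjoint_left.1 hu hau (by simpa using h3.subset ha)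
        rw [hq, List.append_nil] at h1
        rw [← h1] at h2
        exact hne (toList_injective (h2.eq_of_length (by simp [length_toList]))).symm
      · simp
    · have hyu : y u = 0 := by
        by_contra h
        exact hu (hy u h)
      rw [hyu]
      refine sum_append_eq_zero _ Jᶜ hS y hyJ hy0 u ?_
      obtain ⟨a, ha, haJ⟩ := Finset.not_disjoint_iff.1 hu
      have := List.length_filter_lt_length_iff_exists (p := (· ∉ J.toList)) (l := toList u)
      rw [length_toList] at this
      exact this.2 ⟨a, by simpa using ha, by simpa using haJ⟩

end InjWord

/-! ### The filtration -/

open InjWord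

/-- `ker δ({1,…,n},n,n−j) ⊆ ker δ({1,…,n},n,n−j−1)`; the map `δ({1,…,n},n,n−j)` sends
`ker δ({1,…,n},n,n−j−1)` onto `⊕_J ker δ({1,…,n}∖J, n−j, n−j−1)` (sum over `j`-element
subsets `J ⊆ {1,…,n}`), with kernel of the restricted map equal to
`ker δ({1,…,n},n,n−j)`; consequently it induces a linear isomorphism
`ker δ({1,…,n},n,n−j−1) / ker δ({1,…,n},n,n−j) ≅ ⊕_J ker δ({1,…,n}∖J, n−j, n−j−1)`. -/
theorem delta_filtration (n j : ℕ) (hn : 1 ≤ n) (hj : j ≤ n - 1) :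
    LinearMap.ker (delta (Fin n) n (n - j)) ≤
      LinearMap.ker (delta (Fin n) n (n - j - 1)) ∧
    Submodule.map (delta (Fin n) n (n - j))
        (LinearMap.ker (delta (Fin n) n (n - j - 1))) =
      (⨆ J ∈ Finset.powersetCard j (Finset.univ : Finset (Fin n)), avoidKer n j J) ∧
    (∀ x ∈ LinearMap.ker (delta (Fin n) n (n - j - 1)),
      (delta (Fin n) n (n - j) x = 0 ↔ x ∈ LinearMap.ker (delta (Fin n) n (n - j)))) ∧
    Nonempty ((↥(LinearMap.ker (delta (Fin n) n (n - j - 1))) ⧸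
        Submodule.comap (LinearMap.ker (delta (Fin n) n (n - j - 1))).subtype
          (LinearMap.ker (delta (Fin n) n (n - j)))) ≃ₗ[ℝ]
      ↥(⨆ J ∈ Finset.powersetCard j (Finset.univ : Finset (Fin n)), avoidKer n j J)) := by
  have hmap : Submodule.map (delta (Fin n) n (n - j))
        (LinearMap.ker (delta (Fin n) n (n - j - 1))) =
      (⨆ J ∈ Finset.powersetCard j (Finset.univ : Finset (Fin n)), avoidKer n j J) := by
    apply le_antisymm
    · rintro _ ⟨x, hx, rfl⟩
      have hx : delta (Fin n) n (n - j - 1) x = 0 := hx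
      -- `δ x` is the sum of its `J`-components, each word avoiding exactly one `j`-set `J`.
      have hsum : delta (Fin n) n (n - j) x =
          ∑ J ∈ Finset.powersetCard j (Finset.univ : Finset (Fin n)),
            avoidPart J (delta (Fin n) n (n - j) x) := by
        funext w
        have hc : ((toList w).toFinsetᶜ).card = j := by
          rw [Finset.card_compl, card_toFinset_toList, Fintype.card_fin]; omega
        rw [Finset.sum_apply, Finset.sum_eq_single (toList w).toFinsetᶜ]
        · rw [avoidPart, if_pos disjoint_compl_right]
        · intro J hJ hne
          rw [avoidPart, if_neg]
          intro hd
          apply hne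
          rw [toFinset_eq_compl ?_ hd, compl_compl]
          rw [(Finset.mem_powersetCard.1 hJ).2, Fintype.card_fin]; omega
        · intro h
          exact absurd (Finset.mem_powersetCard.2 ⟨Finset.subset_univ _, hc⟩) h
      rw [hsum]
      refine Submodule.sum_mem _ fun J hJ => ?_
      refine Submodule.mem_iSup_of_mem J (Submodule.mem_iSup_of_mem hJ ⟨?_, ?_⟩)
      · rintro w ⟨t, ht⟩
        rw [avoidPart, if_neg]
        intro hd
        exact Finset.disjoint_left.1 hd (List.mem_toFinset.2 (mem_toList.2 ⟨t, rfl⟩)) ht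
      · have hJc := (Finset.mem_powersetCard.1 hJ).2
        obtain ⟨k, hk⟩ : ∃ k, n - j = k + 1 := ⟨n - j - 1, by omega⟩
        rw [hk] at hx ⊢
        exact delta_avoidPart (Fintype.card_fin n) J (by omega) x hx
    · refine iSup₂_le fun J hJ => ?_
      rintro y ⟨hy, hy0⟩
      have hJc := (Finset.mem_powersetCard.1 hJ).2
      have hsupp : ∀ v, y v ≠ 0 → Disjoint (toList v).toFinset J := by
        intro v hv
        rw [Finset.disjoint_left]
        intro a ha haJ
        obtain ⟨t, rfl⟩ := mem_toList.1 (List.mem_toFinset.1 ha)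
        exact hv (hy v ⟨t, haJ⟩)
      obtain ⟨x, hx, hxy⟩ := exists_preimage (Fintype.card_fin n) (by omega : 1 ≤ n - j) J
        (by omega) y hsupp hy0
      exact ⟨x, hx, hxy⟩
  refine ⟨?_, hmap, fun x _ => LinearMap.mem_ker.symm, ?_⟩
  · intro x hx
    exact delta_eq_zero_of_le Finset.univ x
      (fun w _ => toFinset_eq_univ (Fintype.card_fin n) w) (Nat.sub_le n j) hx (Nat.sub_le _ 1)
  · rw [← hmap, ← LinearMap.range_domRestrict]
    have hker : Submodule.comap (LinearMap.ker (delta (Fin n) n (n - j - 1))).subtype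
          (LinearMap.ker (delta (Fin n) n (n - j))) = LinearMap.ker
        ((delta (Fin n) n (n - j)).domRestrict (LinearMap.ker (delta (Fin n) n (n - j - 1)))) := by
      ext x; simp
    rw [hker]
    exact ⟨LinearMap.quotKerEquivRange _⟩
end

section
/- For every n ≥ 1 and every j with 0 ≤ j ≤ n−1, one has dim ker δ({1,…,n}, n, n−j−1) − dim ker δ({1,…,n}, n, n−j) = #{ w ∈ S_n : w has exactly j fixed points } = C(n,j)·d_{n−j}, where d_m denotes the number of derangements in S_m and C(n,j) is the binomial coefficient. -/
/-! ### Insertions of a letter into a word -/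

theorem mem_insertions_perm {α : Type*} (b : α) : ∀ (v u : List α),
    u ∈ List.permutations'Aux b v → u.Perm (b :: v)
  | [], u, hu => by simp_all
  | d :: v, u, hu => by
    simp only [List.permutations'Aux, List.mem_cons, List.mem_map] at hu
    rcases hu with rfl | ⟨t, ht, rfl⟩
    · rfl
    · exact ((mem_insertions_perm b v t ht).cons d).trans (List.Perm.swap b d v)

open List in
/-- If `w` is duplicate-free and contains `b`, and `v` avoids `b`, then exactly one insertion of
`b` into `v` is a subword of `w` when `v` is one, and none otherwise. -/
theorem sum_insertions {α : Type*} [DecidableEq α] (b : α) : ∀ (w v : List α), w.Nodup → b ∈ w →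
    b ∉ v → ((List.permutations'Aux b v).map
      (fun u => if u <+ w then (1 : ℝ) else 0)).sum = if v <+ w then 1 else 0
  | [], _, _, hb, _ => by simp at hb
  | c :: w, [], _, hb, _ => by
    simpa [or_iff_not_imp_left] using hb
  | c :: w, a :: v, hw, hb, hv => by
    simp only [List.nodup_cons] at hw
    simp only [List.mem_cons, not_or] at hv hb
    simp only [List.permutations'Aux, List.map_cons, List.map_map, List.sum_cons, Function.comp_def]
    by_cases hcb : c = b
    · subst hcb
      have hac : a ≠ c := fun h => hv.1 h.symm
      have h0 : ((List.permutations'Aux c v).map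
          (fun u => if (a :: u) <+ (c :: w) then (1 : ℝ) else 0)).sum = 0 := by
        apply List.sum_eq_zero
        intro x hx
        obtain ⟨u, hu, rfl⟩ := List.mem_map.1 hx
        rw [if_neg]
        intro h
        have hcu : c ∈ u := by
          exact (mem_insertions_perm c v u hu).symm.subset (by simp)
        cases h with
        | cons _ h => exact hw.1 (h.subset (by simp [hcu]))
        | cons_cons _ h => exact hac rfl
      rw [h0, add_zero]
      have : (a :: v) <+ (c :: w) ↔ (a :: v) <+ w := by
        constructor
        · intro h
          cases h with
          | cons _ h => exact h
          | cons_cons _ h => exact (hac rfl).elim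
        · exact fun h => h.cons _
      simp [this]
    · have hbw : b ∈ w := by
        rcases hb with h | h
        · exact (hcb h.symm).elim
        · exact h
      have h1 : (b :: a :: v) <+ (c :: w) ↔ (b :: a :: v) <+ w := by
        constructor
        · intro h
          cases h with
          | cons _ h => exact h
          | cons_cons _ h => exact (hcb rfl).elim
        · exact fun h => h.cons _
      by_cases hac : a = c
      · subst hac
        have h2 : ¬ (b :: a :: v) <+ w := fun h => hw.1 (h.subset (by simp))
        have ih := sum_insertions b w v hw.2 hbw hv.2
        simp [h1, h2, ih]
      · have h3 : ∀ u : List α, (a :: u) <+ (c :: w) ↔ (a :: u) <+ w := by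
          intro u
          constructor
          · intro h
            cases h with
            | cons _ h => exact h
            | cons_cons _ h => exact (hac rfl).elim
          · exact fun h => h.cons _
        have ih := sum_insertions b w (a :: v) hw.2 hbw (by simp [hv])
        simp only [List.permutations'Aux, List.map_cons, List.map_map, List.sum_cons,
          Function.comp_def] at ih
        simp only [h1, h3, ih]

/-- A word is leading if one of its letters `b` is smaller than all letters before it and is either
the last letter or larger than the next one. For words with distinct letters this says that
`u = x ++ b :: y` is the lexicographically largest insertion of `b` into `x ++ y`. If such a word
is cut before each of its left-to-right minima, it is nonleading exactly when every block has at
least two letters; under Foata's correspondence these are the derangements. -/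
def Leading {α : Type*} [LinearOrder α] (u : List α) : Prop :=
  ∃ x b y, u = x ++ b :: y ∧ (∀ a ∈ x, b < a) ∧ ∀ c ∈ y.head?, c < b

/-- Among the insertions of `b` into `x ++ y`, all but one occurrence of the leading word
`x ++ b :: y` are lexicographically smaller than it. -/
theorem insertions_perm {α : Type*} [LinearOrder α] (b : α) (y : List α)
    (hy : ∀ c ∈ y.head?, c < b) : ∀ x : List α, (∀ a ∈ x, b < a) →
    ∃ L : List (List α), (List.permutations'Aux b (x ++ y)).Perm ((x ++ b :: y) :: L) ∧
      ∀ z ∈ L, z < x ++ b :: y ∧ z.Perm (x ++ b :: y)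
  | [], _ => by
    cases y with
    | nil => exact ⟨[], by simp, by simp⟩
    | cons c y =>
      refine ⟨(List.permutations'Aux b y).map (List.cons c), by simp, ?_⟩
      intro z hz
      obtain ⟨t, ht, rfl⟩ := List.mem_map.1 hz
      have hcb : c < b := hy c (by simp)
      refine ⟨List.Lex.rel hcb, ?_⟩
      exact ((mem_insertions_perm b y t ht).cons c).trans (List.Perm.swap b c y)
  | a :: x, hx => by
    obtain ⟨L, hL, hz⟩ := insertions_perm b y hy x (fun a' h => hx a' (by simp [h]))
    have hba : b < a := hx a (by simp)
    refine ⟨(b :: a :: (x ++ y)) :: L.map (List.cons a), ?_, ?_⟩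
    · simp only [List.cons_append, List.permutations'Aux]
      exact ((hL.map (List.cons a)).cons _).trans (List.Perm.swap _ _ _)
    · intro z h
      rcases List.mem_cons.1 h with rfl | h
      · refine ⟨List.Lex.rel hba, ?_⟩
        exact (List.Perm.swap a b (x ++ y)).trans (List.perm_middle.symm.cons a)
      · obtain ⟨t, ht, rfl⟩ := List.mem_map.1 h
        exact ⟨List.Lex.cons (hz t ht).1, (hz t ht).2.cons a⟩

/-- There are at most `numDerangements m` nonleading orderings of an `m`-element set. The cover
follows the recursion `d (m + 2) = (m + 1) * (d m + d (m + 1))`: the last letter `a` is not the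
minimum `μ`, and removing either `a` or the final pair `μ, a` leaves a nonleading word. -/
theorem exists_nonleading_cover {α : Type*} [LinearOrder α] : ∀ (m : ℕ) (S : Finset α),
    S.card = m → ∃ F : Finset (List α), F.card ≤ numDerangements m ∧
      ∀ u : List α, u.Nodup → u.toFinset = S → ¬ Leading u → u ∈ F
  | 0, S, hS => by
    refine ⟨{[]}, by simp, fun u _ hu _ => ?_⟩
    rw [Finset.card_eq_zero.1 hS] at hu
    simpa using hu
  | 1, S, hS => by
    refine ⟨∅, by simp, fun u hn hu hl => ?_⟩
    have hlen : u.length = 1 := by rw [← List.toFinset_card_of_nodup hn, hu, hS]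
    obtain ⟨a, rfl⟩ := List.length_eq_one_iff.1 hlen
    exact (hl ⟨[], a, [], by simp⟩).elim
  | m + 2, S, hS => by
    have hne : S.Nonempty := by rw [← Finset.card_pos]; omega
    set μ := S.min' hne with hμ
    have hμS : μ ∈ S := S.min'_mem hne
    have hA : ∀ a : α, ∃ F : Finset (List α), a ∈ S → F.card ≤ numDerangements (m + 1) ∧
        ∀ u : List α, u.Nodup → u.toFinset = S.erase a → ¬ Leading u → u ∈ F := by
      intro a
      by_cases ha : a ∈ S
      · obtain ⟨F, hF⟩ := exists_nonleading_cover (m + 1) (S.erase a)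
          (by rw [Finset.card_erase_of_mem ha]; omega)
        exact ⟨F, fun _ => hF⟩
      · exact ⟨∅, fun h => (ha h).elim⟩
    have hB : ∀ a : α, ∃ F : Finset (List α), a ∈ S.erase μ → F.card ≤ numDerangements m ∧
        ∀ u : List α, u.Nodup → u.toFinset = (S.erase μ).erase a → ¬ Leading u → u ∈ F := by
      intro a
      by_cases ha : a ∈ S.erase μ
      · obtain ⟨F, hF⟩ := exists_nonleading_cover m ((S.erase μ).erase a)
          (by rw [Finset.card_erase_of_mem ha, Finset.card_erase_of_mem hμS]; omega)
        exact ⟨F, fun _ => hF⟩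
      · exact ⟨∅, fun h => (ha h).elim⟩
    choose FA hFA using hA
    choose FB hFB using hB
    refine ⟨(S.erase μ).biUnion fun a =>
      (FB a).image (fun x => x ++ [μ, a]) ∪ (FA a).image (fun x => x ++ [a]), ?_, ?_⟩
    · rw [numDerangements_add_two]
      have hc : (S.erase μ).card = m + 1 := by rw [Finset.card_erase_of_mem hμS]; omega
      refine (Finset.card_biUnion_le_card_mul _ _ (numDerangements m + numDerangements (m + 1))
        ?_).trans_eq (by rw [hc])
      intro a ha
      refine (Finset.card_union_le _ _).trans (add_le_add ?_ ?_)
      · exact Finset.card_image_le.trans (hFB a ha).1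
      · exact Finset.card_image_le.trans (hFA a (Finset.mem_of_mem_erase ha)).1
    · intro u hn hu hl
      rcases List.eq_nil_or_concat u with rfl | ⟨v, a, rfl⟩
      · simp at hu; simp [← hu] at hS
      rw [List.concat_eq_append] at hn hu hl ⊢
      have haS : a ∈ S := by rw [← hu]; simp
      rw [List.nodup_append] at hn
      have hav : a ∉ v := fun h => hn.2.2 a h a (by simp) rfl
      have hvS : v.toFinset = S.erase a := by
        rw [← hu]; ext t
        simp only [List.mem_toFinset, Finset.mem_erase, List.mem_append, List.mem_singleton]
        constructor
        · intro h; exact ⟨fun e => hav (e ▸ h), Or.inl h⟩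
        · rintro ⟨h, h' | h'⟩
          · exact h'
          · exact (h h').elim
      have hvμ : ∀ t ∈ v, μ ≤ t := fun t ht => S.min'_le t (by rw [← hu]; simp [ht])
      have haμ : a ≠ μ := by
        rintro rfl
        refine hl ⟨v, μ, [], rfl, fun t ht => lt_of_le_of_ne (hvμ t ht) ?_, by simp⟩
        rintro rfl
        exact hav ht
      have haE : a ∈ S.erase μ := Finset.mem_erase.2 ⟨haμ, haS⟩
      refine Finset.mem_biUnion.2 ⟨a, haE, Finset.mem_union.2 ?_⟩
      by_cases hv : Leading v
      · left
        obtain ⟨x, b, y, rfl, hx, hy⟩ := hv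
        cases y with
        | cons c y =>
          exact (hl ⟨x, b, c :: y ++ [a], by simp, hx, by simpa using hy⟩).elim
        | nil =>
          have hba : b < a := by
            by_contra hba
            have : a < b := lt_of_le_of_ne (not_lt.1 hba) (by rintro rfl; simp at hav)
            exact hl ⟨x, b, [a], by simp, hx, by simpa using this⟩
          have hbμ : b = μ := by
            apply le_antisymm
            · have : μ ∈ x ++ [b] ++ [a] := by rw [← List.mem_toFinset, hu]; exact hμS
              simp only [List.mem_append, List.mem_singleton] at this
              rcases this with (h | h) | h
              · exact (hx _ h).le
              · exact h.ge
              · exact (haμ h.symm).elim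
            · exact hvμ b (by simp)
          subst hbμ
          have hxn := hn.1
          rw [List.nodup_append] at hxn
          refine Finset.mem_image.2 ⟨x, (hFB a haE).2 x hxn.1 ?_ ?_, by simp⟩
          · rw [Finset.erase_right_comm, ← hvS]
            ext t
            simp only [List.mem_toFinset, Finset.mem_erase, List.mem_append, List.mem_singleton]
            constructor
            · intro h; exact ⟨(hx t h).ne', Or.inl h⟩
            · rintro ⟨h, h' | h'⟩
              · exact h'
              · exact (h h').elim
          · rintro ⟨x', c, y, rfl, hx', hy⟩
            refine hl ⟨x', c, y ++ [μ, a], by simp, hx', ?_⟩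
            cases y with
            | nil => simpa using hx c (by simp)
            | cons d y => simpa using hy
      · right
        exact Finset.mem_image.2 ⟨v, (hFA a haS).2 v hn.1 hvS hv, by simp⟩

/-! ### The row space of `delta` -/

/-- The indicator function, on the permutations of `Fin n` viewed as words, of containing `u` as a
subword. -/
noncomputable def chi (n : ℕ) (u : List (Fin n)) : InjWord (Fin n) n → ℝ :=
  open Classical in fun w => if u.Sublist (List.ofFn w.1) then 1 else 0

/-- The span of the indicators `chi n u` over the injective words `u` of length `k`. This is the
row space of the matrix of `delta (Fin n) n k`. -/
noncomputable def rowSpace (n k : ℕ) : Submodule ℝ (InjWord (Fin n) n → ℝ) :=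
  Submodule.span ℝ (chi n '' {u | u.Nodup ∧ u.length = k})

/-- As the letters of `w` are distinct, the set of positions of a subword `u` is determined by
`u`. -/
theorem mem_iff_of_subword_eq {A : Type*} {j i : ℕ} (w : InjWord A j) (u : InjWord A i)
    (s : Finset (Fin j)) (hs : s.card = i) (h : subword w s hs = u) (p : Fin j) :
    p ∈ s ↔ w.1 p ∈ Set.range u.1 := by
  subst h
  constructor
  · intro hp
    exact ⟨(s.orderIsoOfFin hs).symm ⟨p, hp⟩, by
      simp only [subword, OrderIso.apply_symm_apply]⟩
  · rintro ⟨t, ht⟩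
    rw [← w.2 ht]
    exact (s.orderIsoOfFin hs t).2

theorem exists_subword_iff {A : Type*} {j i : ℕ} (w : InjWord A j) (u : InjWord A i) :
    (∃ (s : Finset (Fin j)) (hs : s.card = i), subword w s hs = u) ↔
      (List.ofFn u.1).Sublist (List.ofFn w.1) := by
  rw [List.sublist_iff_exists_fin_orderEmbedding_get_eq]
  constructor
  · rintro ⟨s, hs, rfl⟩
    refine ⟨((Fin.castOrderIso (List.length_ofFn)).toOrderEmbedding.trans
      (s.orderEmbOfFin hs)).trans (Fin.castOrderIso (List.length_ofFn).symm).toOrderEmbedding, ?_⟩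
    intro ix
    rw [List.get_ofFn, List.get_ofFn]
    rfl
  · rintro ⟨f, hf⟩
    let g : Fin i ↪o Fin j :=
      ((Fin.castOrderIso (List.length_ofFn (f := u.1)).symm).toOrderEmbedding.trans
        f).trans (Fin.castOrderIso (List.length_ofFn)).toOrderEmbedding
    have hg : ∀ t, u.1 t = w.1 (g t) := by
      intro t
      have := hf (Fin.cast (List.length_ofFn (f := u.1)).symm t)
      rw [List.get_ofFn, List.get_ofFn] at this
      exact this
    have hs : (Finset.univ.map g.toEmbedding).card = i := by simp
    refine ⟨Finset.univ.map g.toEmbedding, hs, ?_⟩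
    apply Subtype.ext
    funext t
    rw [hg]
    have := Finset.orderEmbOfFin_unique' hs (f := g) (fun x => by simp)
    exact congrArg w.1 (DFunLike.congr_fun this t).symm

/-- The matrix entries of `delta` are 0 or 1: an injective word contains `u` at most once. -/
theorem entry_eq (n k : ℕ) (u : InjWord (Fin n) k) (w : InjWord (Fin n) n) :
    (((Finset.powersetCard k (Finset.univ : Finset (Fin n))).attach.filter
      (fun s => subword w s.1 (Finset.mem_powersetCard.mp s.2).2 = u)).card : ℝ)
      = chi n (List.ofFn u.1) w := by
  classical
  unfold chi
  split_ifs with h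
  · obtain ⟨s, hs, e⟩ := (exists_subword_iff w u).2 h
    rw [Nat.cast_eq_one, Finset.card_eq_one]
    refine ⟨⟨s, Finset.mem_powersetCard.2 ⟨Finset.subset_univ _, hs⟩⟩, ?_⟩
    ext t
    simp only [Finset.mem_filter, Finset.mem_attach, true_and, Finset.mem_singleton]
    constructor
    · intro ht
      apply Subtype.ext
      ext p
      rw [mem_iff_of_subword_eq w u _ _ ht, mem_iff_of_subword_eq w u s hs e]
    · rintro rfl
      exact e
  · rw [Nat.cast_eq_zero, Finset.card_eq_zero, Finset.filter_eq_empty_iff]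
    intro s _ e
    exact h ((exists_subword_iff w u).1 ⟨_, _, e⟩)

theorem finrank_range_delta (n k : ℕ) :
    Module.finrank ℝ (LinearMap.range (delta (Fin n) n k)) =
      Module.finrank ℝ (rowSpace n k) := by
  have : rowSpace n k = Submodule.span ℝ (Set.range (Matrix.row
      (Matrix.of fun (u : InjWord (Fin n) k) (w : InjWord (Fin n) n) =>
    (((Finset.powersetCard k (Finset.univ : Finset (Fin n))).attach.filter
      (fun s => subword w s.1 (Finset.mem_powersetCard.mp s.2).2 = u)).card : ℝ)))) := by
    unfold rowSpace
    congr 1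
    ext f
    constructor
    · rintro ⟨u, ⟨hu, rfl⟩, rfl⟩
      refine ⟨⟨u.get, List.nodup_iff_injective_get.1 hu⟩, ?_⟩
      funext w
      simp only [Matrix.row, Matrix.of_apply]
      rw [entry_eq]
      simp
    · rintro ⟨u, rfl⟩
      refine ⟨List.ofFn u.1, ⟨List.nodup_ofFn.2 u.2, by simp⟩, ?_⟩
      funext w
      simp only [Matrix.row, Matrix.of_apply]
      rw [entry_eq]
  rw [this, ← Matrix.rank_eq_finrank_span_row]
  rfl

theorem finrank_ker_add (n k : ℕ) :
    Module.finrank ℝ (LinearMap.ker (delta (Fin n) n k)) + Module.finrank ℝ (rowSpace n k)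
      = n.factorial := by
  rw [← finrank_range_delta, add_comm, LinearMap.finrank_range_add_finrank_ker,
    Module.finrank_fintype_fun_eq_card,
    Fintype.card_congr (Equiv.subtypeInjectiveEquivEmbedding (Fin n) (Fin n)),
    Fintype.card_embedding_eq]
  simp [Nat.descFactorial_self]

theorem rowSpace_top (n : ℕ) : rowSpace n n = ⊤ := by
  classical
  rw [eq_top_iff, ← (Pi.basisFun ℝ (InjWord (Fin n) n)).span_eq, Submodule.span_le]
  rintro _ ⟨w, rfl⟩
  apply Submodule.subset_span
  refine ⟨List.ofFn w.1, ⟨List.nodup_ofFn.2 w.2, by simp⟩, ?_⟩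
  funext v
  have : (List.ofFn w.1).Sublist (List.ofFn v.1) ↔ v = w := by
    constructor
    · intro h
      exact Subtype.ext (List.ofFn_injective (h.eq_of_length (by simp))).symm
    · rintro rfl
      exact List.Sublist.refl _
  simp [chi, this, Pi.single_apply]

theorem finrank_rowSpace_zero_le (n : ℕ) : Module.finrank ℝ (rowSpace n 0) ≤ 1 := by
  have : {u : List (Fin n) | u.Nodup ∧ u.length = 0} = {[]} := by
    ext u
    simp only [List.length_eq_zero_iff, Set.mem_ofPred_eq, Set.mem_singleton_iff]
    exact ⟨fun h => h.2, fun h => by simp [h]⟩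
  rw [rowSpace, this, Set.image_singleton]
  simpa using finrank_span_le_card (R := ℝ) {chi n []}

/-! ### Counting permutations by fixed points -/

/-- Choose the fixed points, then a derangement of the remaining points. -/
theorem card_perm_fixed (n j : ℕ) :
    (Finset.univ.filter (fun w : Equiv.Perm (Fin n) =>
        (Finset.univ.filter (fun i => w i = i)).card = j)).card =
      n.choose j * numDerangements (n - j) := by
  classical
  have key : ∀ S ∈ Finset.powersetCard j (Finset.univ : Finset (Fin n)),
      ((Finset.univ.filter (fun w : Equiv.Perm (Fin n) =>
        (Finset.univ.filter (fun i => w i = i)).card = j)).filter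
          (fun w => Finset.univ.filter (fun i => w i = i) = S)).card = numDerangements (n - j) := by
    intro S hS
    have hS := (Finset.mem_powersetCard.1 hS).2
    have h1 := Fintype.card_congr (derangements.subtypeEquiv (fun a : Fin n => a ∉ S))
    rw [card_derangements_eq_numDerangements] at h1
    have h2 : Fintype.card {a : Fin n // a ∉ S} = n - j := by
      simp [Fintype.card_subtype_compl, hS]
    rw [h2] at h1
    rw [h1, Fintype.card_subtype, Finset.filter_filter]
    congr 1
    ext w
    simp only [Finset.mem_filter, Finset.mem_univ, true_and, not_not, Function.mem_fixedPoints,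
      Function.IsFixedPt]
    constructor
    · rintro ⟨_, rfl⟩ a
      simp
    · intro h
      have : Finset.univ.filter (fun i => w i = i) = S := by ext a; simp [h]
      rw [this]; exact ⟨hS, rfl⟩
  rw [Finset.card_eq_sum_card_fiberwise (f := fun w : Equiv.Perm (Fin n) =>
    Finset.univ.filter (fun i => w i = i)) (t := Finset.powersetCard j Finset.univ),
    Finset.sum_congr rfl key]
  · simp
  · intro w hw
    simpa [Finset.mem_powersetCard] using hw

theorem sum_choose_numDerangements (n : ℕ) :
    ∑ k ∈ Finset.range (n + 1), n.choose k * numDerangements k = n.factorial := by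
  rw [← Finset.sum_range_reflect]
  have h := Finset.card_eq_sum_card_fiberwise (s := (Finset.univ : Finset (Equiv.Perm (Fin n))))
    (f := fun w => (Finset.univ.filter (fun i => w i = i)).card) (t := Finset.range (n + 1))
    (by
      intro w _
      simpa [Nat.lt_succ_iff] using Finset.card_filter_le (Finset.univ : Finset (Fin n)) _)
  rw [Finset.card_univ, Fintype.card_perm, Fintype.card_fin] at h
  rw [h]
  refine Finset.sum_congr rfl fun j hj => ?_
  have hj : j ≤ n := Nat.lt_succ_iff.1 (Finset.mem_range.1 hj)
  rw [card_perm_fixed n j]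
  simp [Nat.choose_symm hj]

/-! ### Straightening and the rank bound -/

/-- A permutation containing `v` as a subword contains exactly one of the words obtained by
inserting a further letter `b` into `v`. -/
theorem sum_chi_insertions (n : ℕ) (b : Fin n) (v : List (Fin n)) (hb : b ∉ v) :
    ((List.permutations'Aux b v).map (chi n)).sum = chi n v := by
  classical
  funext w
  have hbw : b ∈ List.ofFn w.1 := by
    obtain ⟨i, hi⟩ := (Finite.injective_iff_surjective.1 w.2) b
    exact List.mem_ofFn.2 ⟨i, hi⟩
  have h := sum_insertions b (List.ofFn w.1) v (List.nodup_ofFn.2 w.2) hbw hb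
  rw [Pi.list_sum_apply, List.map_map]
  convert h using 1
  · congr 1
  · simp only [chi]

/-- Straightening: modulo `rowSpace n k`, the indicator of a leading word of length `k + 1` is
minus the sum of the indicators of lexicographically smaller words, so the indicators of
nonleading words span. -/
theorem rowSpace_succ_le_of_nonleading (n k : ℕ) (T : Submodule ℝ (InjWord (Fin n) n → ℝ))
    (hT : rowSpace n k ≤ T)
    (hN : ∀ u : List (Fin n), u.Nodup → u.length = k + 1 → ¬ Leading u → chi n u ∈ T) :
    rowSpace n (k + 1) ≤ T := by
  rw [rowSpace, Submodule.span_le]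
  rintro _ ⟨u, ⟨hu, hk⟩, rfl⟩
  -- the lexicographic order is well-founded on the finite type of duplicate-free lists
  -- over `Fin n`, though not on all lists
  suffices H : ∀ z : {u : List (Fin n) // u.Nodup}, z.1.length = k + 1 → chi n z.1 ∈ T from
    H ⟨u, hu⟩ hk
  intro z
  induction z using WellFoundedLT.induction with
  | ind z ih =>
    obtain ⟨z, hz⟩ := z
    intro hlen
    by_cases hl : Leading z
    · obtain ⟨x, b, y, rfl, hx, hy⟩ := hl
      obtain ⟨L, hL, hLz⟩ := insertions_perm b y hy x hx
      have hnd : (b :: (x ++ y)).Nodup := List.perm_middle.nodup_iff.1 hz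
      have hlen' : (x ++ y).length = k := by
        simp only [List.length_append, List.length_cons] at hlen ⊢
        omega
      have hsum := sum_chi_insertions n b (x ++ y) (List.nodup_cons.1 hnd).1
      rw [(hL.map (chi n)).sum_eq, List.map_cons, List.sum_cons] at hsum
      rw [eq_sub_of_add_eq hsum]
      refine T.sub_mem (hT (Submodule.subset_span ⟨_, ⟨(List.nodup_cons.1 hnd).2, hlen'⟩, rfl⟩)) ?_
      refine list_sum_mem fun f hf => ?_
      obtain ⟨t, ht, rfl⟩ := List.mem_map.1 hf
      obtain ⟨hlt, hp⟩ := hLz t ht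
      exact ih ⟨t, hp.nodup_iff.2 hz⟩ hlt (hp.length_eq.trans hlen)
    · exact hN z hz hlen hl

theorem finrank_rowSpace_succ_le (n k : ℕ) :
    Module.finrank ℝ (rowSpace n (k + 1)) ≤
      Module.finrank ℝ (rowSpace n k) + n.choose (k + 1) * numDerangements (k + 1) := by
  classical
  have hF : ∀ B : Finset (Fin n), ∃ F : Finset (List (Fin n)),
      F.card ≤ numDerangements B.card ∧
      ∀ u : List (Fin n), u.Nodup → u.toFinset = B → ¬ Leading u → u ∈ F :=
    fun B => exists_nonleading_cover _ B rfl
  choose F hcard hF using hF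
  obtain ⟨G, hGdef⟩ : ∃ G : Finset (InjWord (Fin n) n → ℝ),
    G = ((Finset.powersetCard (k + 1) Finset.univ).biUnion F).image (chi n) := ⟨_, rfl⟩
  have hG : G.card ≤ n.choose (k + 1) * numDerangements (k + 1) := by
    rw [hGdef]
    refine Finset.card_image_le.trans ?_
    refine (Finset.card_biUnion_le_card_mul _ _ (numDerangements (k + 1)) ?_).trans_eq (by simp)
    intro B hB
    exact (hcard B).trans_eq (by rw [(Finset.mem_powersetCard.1 hB).2])
  have hle : rowSpace n (k + 1) ≤
      rowSpace n k ⊔ Submodule.span ℝ (G : Set (InjWord (Fin n) n → ℝ)) := by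
    refine rowSpace_succ_le_of_nonleading n k _ le_sup_left fun u hu hlen hl => ?_
    refine (le_sup_right : Submodule.span ℝ (G : Set (InjWord (Fin n) n → ℝ)) ≤ _)
      (Submodule.subset_span ?_)
    rw [hGdef]
    refine Finset.mem_coe.2 (Finset.mem_image_of_mem _ (Finset.mem_biUnion.2
      ⟨u.toFinset, ?_, hF _ u hu rfl hl⟩))
    exact Finset.mem_powersetCard.2
      ⟨Finset.subset_univ _, by rw [List.toFinset_card_of_nodup hu, hlen]⟩
  have h1 := Submodule.finrank_mono hle
  have h2 := Submodule.finrank_add_le_finrank_add_finrank (rowSpace n k)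
    (Submodule.span ℝ (G : Set (InjWord (Fin n) n → ℝ)))
  have h3 : Module.finrank ℝ (Submodule.span ℝ (G : Set (InjWord (Fin n) n → ℝ))) ≤ G.card :=
    finrank_span_finset_le_card G
  exact h1.trans (h2.trans (Nat.add_le_add_left (h3.trans hG) _))

/-- If `r` grows by at most `c (k + 1)` at each step, starting from at most `c 0`, and reaches the
full sum of the `c k` at `n`, then every step below `n` is an equality. -/
theorem increments_eq (r c : ℕ → ℕ) (n : ℕ) (h0 : r 0 ≤ c 0)
    (hs : ∀ k, r (k + 1) ≤ r k + c (k + 1))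
    (hn : ∑ k ∈ Finset.range (n + 1), c k ≤ r n) (k : ℕ) (hk : k < n) :
    r (k + 1) = r k + c (k + 1) := by
  have hup : ∀ m, r m ≤ ∑ i ∈ Finset.range (m + 1), c i := by
    intro m
    induction m with
    | zero => simpa using h0
    | succ m ih =>
      rw [Finset.sum_range_succ]
      exact (hs m).trans (by omega)
  have hdown : ∀ m, m ≤ n → ∑ i ∈ Finset.range (m + 1), c i ≤ r m := by
    intro m hm
    refine Nat.decreasingInduction (motive := fun m _ => ∑ i ∈ Finset.range (m + 1), c i ≤ r m)
      (fun m _ ih => ?_) hn hm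
    rw [Finset.sum_range_succ] at ih
    have := hs m
    omega
  have h1 := hdown (k + 1) hk
  rw [Finset.sum_range_succ] at h1
  have h2 := hup k
  have h3 := hs k
  omega

/-- `dim ker δ({1,…,n},n,n−j−1) − dim ker δ({1,…,n},n,n−j)` equals the number of
permutations in `S_n` with exactly `j` fixed points, which equals `C(n,j)·d_{n−j}`. -/
theorem finrank_ker_delta_diff (n j : ℕ) (hn : 1 ≤ n) (hj : j ≤ n - 1) :
    ((Module.finrank ℝ (LinearMap.ker (delta (Fin n) n (n - j - 1))) : ℤ) -
        (Module.finrank ℝ (LinearMap.ker (delta (Fin n) n (n - j))) : ℤ) =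
      ((Finset.univ.filter (fun w : Equiv.Perm (Fin n) =>
        (Finset.univ.filter (fun i => w i = i)).card = j)).card : ℤ)) ∧
    (Finset.univ.filter (fun w : Equiv.Perm (Fin n) =>
        (Finset.univ.filter (fun i => w i = i)).card = j)).card =
      n.choose j *
        (Finset.univ.filter (fun w : Equiv.Perm (Fin (n - j)) => ∀ i, w i ≠ i)).card := by
  have hcount := card_perm_fixed n j
  have hder : (Finset.univ.filter (fun w : Equiv.Perm (Fin (n - j)) => ∀ i, w i ≠ i)).card
      = numDerangements (n - j) := by
    rw [← card_derangements_fin_eq_numDerangements, ← Fintype.card_subtype]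
    exact Fintype.card_congr (Equiv.refl _)
  refine ⟨?_, by rw [hcount, hder]⟩
  obtain ⟨k, hk⟩ : ∃ k, n - j = k + 1 := ⟨n - j - 1, by omega⟩
  have hstep := increments_eq (fun k => Module.finrank ℝ (rowSpace n k))
    (fun k => n.choose k * numDerangements k) n
    (by simpa using finrank_rowSpace_zero_le n) (finrank_rowSpace_succ_le n)
    (by
      have h := finrank_ker_add n n
      have hker : Module.finrank ℝ (LinearMap.ker (delta (Fin n) n n)) = 0 := by
        have hrange := LinearMap.finrank_range_add_finrank_ker (delta (Fin n) n n)
        rw [finrank_range_delta, rowSpace_top, finrank_top] at hrange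
        omega
      simp only [sum_choose_numDerangements]
      omega) k (by omega)
  have h1 := finrank_ker_add n (k + 1)
  have h2 := finrank_ker_add n k
  rw [hcount, show n.choose j = n.choose (k + 1) by rw [← hk, Nat.choose_symm (by omega)], hk,
    Nat.add_sub_cancel]
  omega
end
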